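/- arXiv:1203.3187 — 2 statements merged into one kernel-verified Lean document; each statement's English description precedes it below -/
import Mathlib

section
/- For every integer n ≥ 2, as an identity in the field of rational functions ℚ(x,y,z1,z2) (with the convention Z_0(x,y) = 1), the adjacent-boundary doubly-refined ASM generating function can be expressed as: Zadj_n(x,y;z1,z2) = Z_{n−1}(x,y)·( 1 + Σ_{i=1}^{n−1} ( y·z1·z2 / ((z1−1)(z2−1)) )^{n−i} · ( 1 + (x(z1−1)(z2−1)−y)·Z_i(x,y;z1)·Z_i(x,y;z2) / ( y·Z_{i−1}(x,y)·Z_i(x,y) ) ) ). -/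
open Finset

/-- The `n × n` integer matrix encoded by `e`, with entries in `{-1, 0, 1}`. -/
def asmMat {n : ℕ} (e : Fin n → Fin n → Fin 3) : Fin n → Fin n → ℤ :=
  fun i j => (e i j : ℤ) - 1

/-- `A` is an alternating sign matrix: all entries lie in `{-1, 0, 1}`, every
partial row sum and every partial column sum is `0` or `1` (equivalently, the
nonzero entries of each row and of each column alternate in sign), and every
complete row sum and column sum is `1`. -/
def IsASM {n : ℕ} (A : Fin n → Fin n → ℤ) : Prop :=
  (∀ i j, A i j = -1 ∨ A i j = 0 ∨ A i j = 1) ∧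
  (∀ (i j : Fin n), (∑ j' ∈ univ.filter (fun j' : Fin n => j' ≤ j), A i j') = 0 ∨
    (∑ j' ∈ univ.filter (fun j' : Fin n => j' ≤ j), A i j') = 1) ∧
  (∀ (i j : Fin n), (∑ i' ∈ univ.filter (fun i' : Fin n => i' ≤ i), A i' j) = 0 ∨
    (∑ i' ∈ univ.filter (fun i' : Fin n => i' ≤ i), A i' j) = 1) ∧
  (∀ i : Fin n, (∑ j, A i j) = 1) ∧
  (∀ j : Fin n, (∑ i, A i j) = 1)

/-- `ν(A)`, the number of generalized inversions of `A`. -/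
def nuASM {n : ℕ} (A : Fin n → Fin n → ℤ) : ℕ :=
  (∑ i : Fin n, ∑ i' : Fin n, ∑ j : Fin n, ∑ j' : Fin n,
      if i < i' ∧ j' ≤ j then A i j * A i' j' else 0).toNat

/-- `μ(A)`, the number of entries of `A` equal to `-1`. -/
def muASM {n : ℕ} (A : Fin n → Fin n → ℤ) : ℕ :=
  (univ.filter (fun p : Fin n × Fin n => A p.1 p.2 = -1)).card

/-- `ρT(A)`, the number of `0`'s to the left of the `1` in the top row of `A`. -/
def rhoT {n : ℕ} (A : Fin n → Fin n → ℤ) : ℕ :=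
  (univ.filter (fun j : Fin n =>
    A ⟨0, j.pos⟩ j = 0 ∧ ∃ j' : Fin n, j < j' ∧ A ⟨0, j.pos⟩ j' = 1)).card

/-- `ρR(A)`, the number of `0`'s below the `1` in the right-most column of `A`. -/
def rhoR {n : ℕ} (A : Fin n → Fin n → ℤ) : ℕ :=
  (univ.filter (fun i : Fin n =>
    A i ⟨n - 1, Nat.sub_lt i.pos Nat.one_pos⟩ = 0 ∧
      ∃ i' : Fin n, i' < i ∧ A i' ⟨n - 1, Nat.sub_lt i.pos Nat.one_pos⟩ = 1)).card

/-- `ρB(A)`, the number of `0`'s to the right of the `1` in the bottom row of `A`. -/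
def rhoB {n : ℕ} (A : Fin n → Fin n → ℤ) : ℕ :=
  (univ.filter (fun j : Fin n =>
    A ⟨n - 1, Nat.sub_lt j.pos Nat.one_pos⟩ j = 0 ∧
      ∃ j' : Fin n, j' < j ∧ A ⟨n - 1, Nat.sub_lt j.pos Nat.one_pos⟩ j' = 1)).card

/-- `ρL(A)`, the number of `0`'s above the `1` in the left-most column of `A`. -/
def rhoL {n : ℕ} (A : Fin n → Fin n → ℤ) : ℕ :=
  (univ.filter (fun i : Fin n =>
    A i ⟨0, i.pos⟩ = 0 ∧ ∃ i' : Fin n, i < i' ∧ A i' ⟨0, i.pos⟩ = 1)).card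

open Classical in
/-- The quadruply-refined ASM generating function
`Zqua_n(x,y;z1,z2,z3,z4) = Σ_A x^{ν(A)} y^{μ(A)} z1^{ρT(A)} z2^{ρR(A)} z3^{ρB(A)} z4^{ρL(A)}`. -/
noncomputable def Zqua (n : ℕ) {R : Type*} [CommRing R] (x y z1 z2 z3 z4 : R) : R :=
  ∑ e : Fin n → Fin n → Fin 3,
    if IsASM (asmMat e) then
      x ^ nuASM (asmMat e) * y ^ muASM (asmMat e) * z1 ^ rhoT (asmMat e) *
        z2 ^ rhoR (asmMat e) * z3 ^ rhoB (asmMat e) * z4 ^ rhoL (asmMat e)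
    else 0

/-- Adjacent-boundary doubly-refined generating function `Zadj_n(x,y;z1,z2)`. -/
noncomputable def Zadj (n : ℕ) {R : Type*} [CommRing R] (x y z1 z2 : R) : R :=
  Zqua n x y z1 1 1 z2

/-- Alternative adjacent-boundary doubly-refined generating function `Zbaradj_n(x,y;z1,z2)`. -/
noncomputable def Zbaradj (n : ℕ) {R : Type*} [CommRing R] (x y z1 z2 : R) : R :=
  Zqua n x y z1 z2 1 1

/-- Triply-refined generating function `Ztri_n(x,y;z1,z2,z3)`. -/
noncomputable def Ztri (n : ℕ) {R : Type*} [CommRing R] (x y z1 z2 z3 : R) : R :=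
  Zqua n x y z1 1 z2 z3

/-- Opposite-boundary doubly-refined generating function `Zopp_n(x,y;z1,z2)`. -/
noncomputable def Zopp (n : ℕ) {R : Type*} [CommRing R] (x y z1 z2 : R) : R :=
  Zqua n x y z1 1 z2 1

/-- Singly-refined generating function `Z_n(x,y;z)`. -/
noncomputable def Zsing (n : ℕ) {R : Type*} [CommRing R] (x y z : R) : R :=
  Zqua n x y z 1 1 1

/-- Unrefined generating function `Z_n(x,y)`.  Note `Zun 0 x y = 1`. -/
noncomputable def Zun (n : ℕ) {R : Type*} [CommRing R] (x y : R) : R :=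
  Zqua n x y 1 1 1 1


/-- The field of rational functions over `ℚ` in 4 variables. -/
noncomputable abbrev K4 : Type := FractionRing (MvPolynomial (Fin 4) ℚ)

noncomputable def vx : K4 := algebraMap (MvPolynomial (Fin 4) ℚ) K4 (MvPolynomial.X 0)
noncomputable def vy : K4 := algebraMap (MvPolynomial (Fin 4) ℚ) K4 (MvPolynomial.X 1)
noncomputable def vz1 : K4 := algebraMap (MvPolynomial (Fin 4) ℚ) K4 (MvPolynomial.X 2)
noncomputable def vz2 : K4 := algebraMap (MvPolynomial (Fin 4) ℚ) K4 (MvPolynomial.X 3)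

/-!
Alternating sign matrices are the configurations of the six-vertex model with domain wall boundary
conditions. Its partition function is symmetric in the column parameters by the Yang–Baxter
equation, and interpolation in the first row parameter gives the Izergin–Korepin determinant. The
Desnanot–Jacobi identity for that determinant is a bilinear relation between the partition
functions obtained by deleting some of the first two rows and as many of the first two columns.

When all the remaining parameters are equal and related to `x` and `y`, a configuration has weight
`x ^ ν * y ^ μ` up to a common factor, and the first row and column parameters only introduce
factors `z₁ ^ ρT` and `z₂ ^ ρL`. The bilinear relation becomes a first-order recursion for `Zadj` in
`n`, which the sum over `i` solves. Suitable parameters exist in an algebraic closure of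
`ℚ(x, y, z₁, z₂)`, so the recursion is an identity of polynomials.
-/

open Matrix
open scoped Kronecker

theorem sum_vecCons {α M : Type*} [Fintype α] [AddCommMonoid M] {n : ℕ}
    (f : (Fin (n + 1) → α) → M) : ∑ g, f g = ∑ a, ∑ g, f (vecCons a g) := by
  rw [← (Fin.consEquiv fun _ => α).sum_comp, Fintype.sum_prod_type]
  rfl

theorem vecCons_comp {α β : Type*} {n : ℕ} (f : α → β) (a : α) (g : Fin n → α) :
    f ∘ vecCons a g = vecCons (f a) (f ∘ g) :=
  funext (Fin.cases rfl fun _ => rfl)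

theorem vecCons_eq_const {α : Type*} {n : ℕ} {a b : α} {g : Fin n → α} :
    (vecCons a g = fun _ => b) ↔ a = b ∧ g = fun _ => b := by
  simp [funext_iff, Fin.forall_fin_succ]

namespace SixVertex

section Weights

variable {R : Type*} [CommRing R]

/-- The weight of a vertex of the six-vertex model with row parameter `u`, column parameter `v`
and crossing parameter `q`. The four arguments of type `Bool` tell whether the left, right, top and
bottom edges of the vertex carry a path. -/
def vertexWeight (q u v : R) : Bool → Bool → Bool → Bool → R
  | true, true, true, true => u - q * v
  | false, false, false, false => u - q * v
  | true, true, false, false => q * (u - v)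
  | false, false, true, true => u - v
  | true, false, true, false => 1
  | false, true, false, true => (q - 1) ^ 2 * u * v
  | _, _, _, _ => 0

/-- The transfer matrix of a column of vertices, from the top edge to the bottom edge, given the
states `l` and `r` of the edges to its left and to its right. -/
def columnMatrix (q : R) {n : ℕ} (u : Fin n → R) (v : R) (l r : Fin n → Bool) :
    Matrix Bool Bool R :=
  (List.ofFn fun i => of (vertexWeight q (u i) v (l i) (r i))).prod

/-- The transfer matrix across a column whose top edge carries a path and whose bottom edge
does not. -/
def transferMatrix (q : R) {n : ℕ} (u : Fin n → R) (v : R) :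
    Matrix (Fin n → Bool) (Fin n → Bool) R :=
  of fun l r => columnMatrix q u v l r true false

/-- The partition function of the six-vertex model on the columns `vs`, with paths on the left
edges prescribed by `l` and on all top edges, and none on the right and bottom edges. -/
def partitionFrom (q : R) {n : ℕ} (u : Fin n → R) (vs : List R) (l : Fin n → Bool) : R :=
  (vs.map (transferMatrix q u)).prod l fun _ => false

/-- The partition function of the six-vertex model with domain wall boundary conditions. -/
def partition (q : R) {m n : ℕ} (u : Fin n → R) (v : Fin m → R) : R :=
  partitionFrom q u (List.ofFn v) fun _ => true

/-- The matrix intertwining the two orders of two adjacent columns with parameters `v`, `w`. -/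
def crossing (q v w : R) : Matrix (Bool × Bool) (Bool × Bool) R :=
  of fun s t => match s, t with
    | (true, true), (true, true) => q * w - v
    | (false, false), (false, false) => q * w - v
    | (true, false), (true, false) => (q - 1) * v
    | (true, false), (false, true) => w - v
    | (false, true), (true, false) => q * (w - v)
    | (false, true), (false, true) => (q - 1) * w
    | _, _ => 0

theorem columnMatrix_zero (q : R) (u : Fin 0 → R) (v : R) (l r : Fin 0 → Bool) :
    columnMatrix q u v l r = 1 :=
  rfl

theorem columnMatrix_succ (q : R) {n : ℕ} (u : Fin (n + 1) → R) (v : R)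
    (l r : Fin (n + 1) → Bool) :
    columnMatrix q u v l r = of (vertexWeight q (u 0) v (l 0) (r 0)) *
      columnMatrix q (vecTail u) v (vecTail l) (vecTail r) := by
  rw [columnMatrix, List.ofFn_succ, List.prod_cons]
  rfl

theorem partitionFrom_nil (q : R) {n : ℕ} (u : Fin n → R) (l : Fin n → Bool) :
    partitionFrom q u [] l = if l = fun _ => false then 1 else 0 :=
  one_apply

theorem partitionFrom_cons (q : R) {n : ℕ} (u : Fin n → R) (v : R) (vs : List R)
    (l : Fin n → Bool) :
    partitionFrom q u (v :: vs) l =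
      ∑ r, columnMatrix q u v l r true false * partitionFrom q u vs r := by
  rw [partitionFrom, List.map_cons, List.prod_cons, mul_apply]
  rfl

theorem yangBaxter (q u v w : R) (l r : Bool) :
    crossing q v w * ∑ m, of (vertexWeight q u v l m) ⊗ₖ of (vertexWeight q u w m r) =
      (∑ m, of (vertexWeight q u w l m) ⊗ₖ of (vertexWeight q u v m r)) * crossing q v w := by
  ext ⟨a, b⟩ ⟨c, d⟩
  simp only [crossing, mul_apply, Fintype.sum_prod_type, Fintype.sum_bool, Matrix.add_apply,
    of_apply, kroneckerMap_apply]
  cases l <;> cases r <;> cases a <;> cases b <;> cases c <;> cases d <;>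
    simp only [vertexWeight] <;> ring

theorem sum_columnMatrix_kronecker (q : R) {n : ℕ} (u : Fin (n + 1) → R) (v w : R)
    (l r : Fin (n + 1) → Bool) :
    ∑ m, columnMatrix q u v l m ⊗ₖ columnMatrix q u w m r =
      (∑ m, of (vertexWeight q (u 0) v (l 0) m) ⊗ₖ of (vertexWeight q (u 0) w m (r 0))) *
        ∑ m, columnMatrix q (vecTail u) v (vecTail l) m ⊗ₖ
          columnMatrix q (vecTail u) w m (vecTail r) := by
  simp only [sum_vecCons, columnMatrix_succ, cons_val_zero, tail_cons, mul_kronecker_mul,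
    ← mul_sum, sum_mul]

theorem crossing_mul_sum_columnMatrix (q : R) {n : ℕ} (u : Fin n → R) (v w : R)
    (l r : Fin n → Bool) :
    crossing q v w * ∑ m, columnMatrix q u v l m ⊗ₖ columnMatrix q u w m r =
      (∑ m, columnMatrix q u w l m ⊗ₖ columnMatrix q u v m r) * crossing q v w := by
  induction n with
  | zero => simp [columnMatrix_zero]
  | succ n ih =>
    rw [sum_columnMatrix_kronecker, sum_columnMatrix_kronecker, ← mul_assoc, yangBaxter, mul_assoc,
      ih, mul_assoc]

theorem transferMatrix_commute [NoZeroDivisors R] {q v w : R} (h : q * w - v ≠ 0) {n : ℕ}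
    (u : Fin n → R) : Commute (transferMatrix q u v) (transferMatrix q u w) := by
  ext l r
  have key := congrFun₂ (crossing_mul_sum_columnMatrix q u v w l r) (true, true) (false, false)
  simp only [mul_apply, Fintype.sum_prod_type, Fintype.sum_bool, crossing, Matrix.sum_apply,
    of_apply, kroneckerMap_apply, zero_mul, mul_zero, add_zero, zero_add] at key
  rw [mul_comm] at key
  simpa only [mul_apply, transferMatrix, of_apply] using mul_right_cancel₀ h key

theorem partition_comp_perm [NoZeroDivisors R] {q : R} {m n : ℕ} (u : Fin n → R) {v : Fin m → R}
    (h : ∀ i j, q * v j - v i ≠ 0) (σ : Equiv.Perm (Fin m)) :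
    partition q u (v ∘ σ) = partition q u v := by
  refine congrFun₂ (((σ.ofFn_comp_perm v).map (transferMatrix q u)).prod_eq' ?_) _ _
  rw [List.map_ofFn, List.pairwise_ofFn]
  exact fun i j _ => transferMatrix_commute (h _ _) u

variable {S : Type*} [CommRing S] (f : R →+* S)

theorem map_columnMatrix (q : R) {n : ℕ} (u : Fin n → R) (v : R) (l r : Fin n → Bool) :
    f.mapMatrix (columnMatrix q u v l r) = columnMatrix (f q) (f ∘ u) (f v) l r := by
  have hf (u : R) (l r : Bool) :
      f.mapMatrix (of (vertexWeight q u v l r)) = of (vertexWeight (f q) (f u) (f v) l r) := by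
    ext t d
    cases l <;> cases r <;> cases t <;> cases d <;> simp [vertexWeight]
  simp only [columnMatrix, map_list_prod, List.map_ofFn, Function.comp_def, hf]

theorem map_partitionFrom (q : R) {n : ℕ} (u : Fin n → R) (vs : List R) (l : Fin n → Bool) :
    f (partitionFrom q u vs l) = partitionFrom (f q) (f ∘ u) (vs.map f) l := by
  have hf : transferMatrix (f q) (f ∘ u) ∘ f = f.mapMatrix ∘ transferMatrix q u := by
    ext v l r
    exact (congrFun₂ (map_columnMatrix f q u v l r) true false).symm
  rw [partitionFrom, partitionFrom, List.map_map, hf, ← List.map_map, ← map_list_prod]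
  rfl

theorem map_partition (q : R) {m n : ℕ} (u : Fin n → R) (v : Fin m → R) :
    f (partition q u v) = partition (f q) (f ∘ u) (f ∘ v) := by
  rw [partition, map_partitionFrom, List.map_ofFn, partition]

end Weights

section FirstRow

variable {R : Type*} [CommRing R]

theorem partitionFrom_vecCons_false (q t : R) {n : ℕ} (u : Fin n → R) (vs : List R)
    (l : Fin n → Bool) :
    partitionFrom q (vecCons t u) vs (vecCons false l) =
      (vs.map fun w => t - w).prod * partitionFrom q u vs l := by
  induction vs generalizing l with
  | nil => simp [partitionFrom_nil, vecCons_eq_const]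
  | cons v vs ih =>
    simp only [partitionFrom_cons, sum_vecCons, Fintype.sum_bool, columnMatrix_succ, cons_val_zero,
      tail_cons, mul_apply, of_apply, vertexWeight, ih, zero_mul, add_zero, sum_const_zero,
      zero_add, List.map_cons, List.prod_cons, mul_sum]
    exact sum_congr rfl fun r _ => by ring

theorem partitionFrom_vecCons_true (q t : R) {n : ℕ} (u : Fin n → R) (v : R) (vs : List R)
    (l : Fin n → Bool) :
    partitionFrom q (vecCons t u) (v :: vs) (vecCons true l) =
      ∑ r, ((t - q * v) * columnMatrix q u v l r true false *
          partitionFrom q (vecCons t u) vs (vecCons true r) +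
        columnMatrix q u v l r false false * (vs.map fun w => t - w).prod *
          partitionFrom q u vs r) := by
  simp only [partitionFrom_cons, sum_vecCons, Fintype.sum_bool, partitionFrom_vecCons_false,
    columnMatrix_succ, cons_val_zero, tail_cons, mul_apply, of_apply, vertexWeight, zero_mul,
    add_zero, zero_add, one_mul, ← sum_add_distrib]
  exact sum_congr rfl fun r _ => by ring

open Polynomial in
theorem degree_partitionFrom_X_lt [Nontrivial R] (q : R) {n : ℕ} (u : Fin n → R) (vs : List R)
    (l : Fin n → Bool) :
    (partitionFrom (C q) (vecCons X (C ∘ u)) (vs.map C) (vecCons true l)).degree <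
      vs.length := by
  induction vs generalizing l with
  | nil => simp [partitionFrom_nil, vecCons_eq_const]
  | cons v vs ih =>
    have hC (r t d) : columnMatrix (C q) (C ∘ u) (C v) l r t d = C (columnMatrix q u v l r t d) :=
      (congrFun₂ (map_columnMatrix C q u v l r) t d).symm
    have hprod : (((vs.map C).map fun w => X - w).prod : R[X]).degree ≤ vs.length := by
      refine (degree_list_prod_le _).trans ?_
      simp [Function.comp_def, degree_X_sub_C]
    simp only [List.map_cons, partitionFrom_vecCons_true, hC, ← map_partitionFrom, ← C_mul,
      List.length_cons]
    rw [← mem_degreeLT]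
    refine Submodule.sum_mem _ fun r _ => Submodule.add_mem _ ?_ ?_ <;> rw [mem_degreeLT]
    · calc ((X - C (q * v)) * C (columnMatrix q u v l r true false) *
            partitionFrom (C q) (vecCons X (C ∘ u)) (vs.map C) (vecCons true r)).degree
          = (columnMatrix q u v l r true false • ((X - C (q * v)) *
              partitionFrom (C q) (vecCons X (C ∘ u)) (vs.map C) (vecCons true r))).degree := by
            rw [smul_eq_C_mul]; ring_nf
        _ ≤ 1 + (partitionFrom (C q) (vecCons X (C ∘ u)) (vs.map C) (vecCons true r)).degree :=
            (degree_smul_le _ _).trans ((degree_mul_le _ _).trans_eq (by rw [degree_X_sub_C]))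
        _ < 1 + vs.length := WithBot.add_lt_add_left (by simp) (ih r)
        _ = (vs.length + 1 : ℕ) := by push_cast; ring
    · calc (C (columnMatrix q u v l r false false) * ((vs.map C).map fun w => X - w).prod *
            C (partitionFrom q u vs r)).degree
          = ((columnMatrix q u v l r false false * partitionFrom q u vs r) •
              ((vs.map C).map fun w => X - w).prod).degree := by
            rw [smul_eq_C_mul, C_mul]; ring_nf
        _ ≤ vs.length := (degree_smul_le _ _).trans hprod
        _ < (vs.length + 1 : ℕ) := by exact_mod_cast Nat.lt_succ_self _

open Polynomial in
theorem degree_partition_X_lt [Nontrivial R] (q : R) {m n : ℕ} (u : Fin n → R) (v : Fin m → R) :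
    (partition (C q) (vecCons X (C ∘ u)) (C ∘ v)).degree < m := by
  have h := degree_partitionFrom_X_lt q u (List.ofFn v) fun _ => true
  rwa [vecCons_const, List.map_ofFn, List.length_ofFn] at h

theorem columnMatrix_true_false_false (q : R) {n : ℕ} (u : Fin n → R) (v : R) (r : Fin n → Bool) :
    columnMatrix q u v (fun _ => true) r false false =
      if r = fun _ => true then ∏ i, q * (u i - v) else 0 := by
  induction n with
  | zero => simp [columnMatrix_zero, Subsingleton.elim r fun _ => true]
  | succ n ih =>
    rw [← cons_head_tail r, columnMatrix_succ, mul_apply, Fintype.sum_bool, tail_cons,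
      show vecTail (fun _ : Fin (n + 1) => true) = fun _ => true from rfl, ih, Fin.prod_univ_succ]
    cases vecHead r
    · simp [vertexWeight, vecCons_eq_const]
    · simp only [cons_val_zero, of_apply, vertexWeight, vecCons_eq_const, true_and, zero_mul,
        zero_add, mul_ite, mul_zero]
      rfl

theorem partition_vecCons_vecCons (q v : R) {m n : ℕ} (u : Fin n → R) (w : Fin m → R) :
    partition q (vecCons (q * v) u) (vecCons v w) =
      (∏ i, q * (u i - v)) * (∏ j, (q * v - w j)) * partition q u w := by
  rw [partition, List.ofFn_succ, cons_val_zero, ← vecCons_const true, partitionFrom_vecCons_true]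
  simp [columnMatrix_true_false_false, partition, List.prod_ofFn, Function.comp_def]

end FirstRow

end SixVertex

theorem det_vandermonde_vecCons {R : Type*} [CommRing R] {n : ℕ} (a : R) (v : Fin n → R) :
    (vandermonde (vecCons a v)).det = (∏ i, (v i - a)) * (vandermonde v).det := by
  simp [det_vandermonde, Fin.prod_univ_succ, Fin.prod_Ioi_succ]

theorem map_det_vandermonde {R S : Type*} [CommRing R] [CommRing S] (f : R →+* S) {n : ℕ}
    (v : Fin n → R) : f (vandermonde v).det = (vandermonde (f ∘ v)).det := by
  simp [det_vandermonde, map_prod]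

namespace SixVertex

section IzerginKorepin

variable {R : Type*} [CommRing R]

/-- The product of the two weights of a vertex without turns, in the normalisation used in the
Izergin–Korepin determinant. -/
def straightWeight (q u v : R) : R :=
  (u - q * v) * (u - v)

/-- The Izergin–Korepin matrix, with entries `1 / straightWeight q (u i) (v j)`, after the
denominators of each row have been cleared. -/
def izerginMatrix (q : R) {n : ℕ} (u v : Fin n → R) : Matrix (Fin n) (Fin n) R :=
  of fun i j => ∏ k with k ≠ j, straightWeight q (u i) (v k)

/-- The Izergin–Korepin formula for the parameters `q`, `u`, `v`, as an equation without
denominators. -/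
def IzerginKorepin (q : R) {n : ℕ} (u v : Fin n → R) : Prop :=
  partition q u v * (vandermonde (-u)).det * (vandermonde v).det = (izerginMatrix q u v).det

/-- Parameters for which the nodes used to interpolate the partition function are distinct and no
denominator of the Izergin–Korepin matrix vanishes. -/
structure Generic (q : R) {m n : ℕ} (u : Fin n → R) (v : Fin m → R) : Prop where
  q_ne_zero : q ≠ 0
  injective_left : Function.Injective u
  injective_right : Function.Injective v
  mul_sub_ne_zero : ∀ i j, q * v j - v i ≠ 0
  straightWeight_ne_zero : ∀ i j, straightWeight q (u i) (v j) ≠ 0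

theorem Generic.comp {q : R} {m m' n n' : ℕ} {u : Fin n → R} {v : Fin m → R} (h : Generic q u v)
    {f : Fin n' → Fin n} {g : Fin m' → Fin m} (hf : Function.Injective f)
    (hg : Function.Injective g) : Generic q (u ∘ f) (v ∘ g) :=
  ⟨h.q_ne_zero, h.injective_left.comp hf, h.injective_right.comp hg,
    fun _ _ => h.mul_sub_ne_zero _ _, fun _ _ => h.straightWeight_ne_zero _ _⟩

theorem izerginMatrix_apply (q : R) {n : ℕ} (u v : Fin n → R) (i j : Fin n) :
    izerginMatrix q u v i j = ∏ k with k ≠ j, straightWeight q (u i) (v k) :=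
  rfl

theorem izerginMatrix_submatrix_succAbove (q : R) {n : ℕ} (u v : Fin (n + 1) → R)
    (i j : Fin (n + 1)) :
    (izerginMatrix q u v).submatrix i.succAbove j.succAbove = of fun i' j' =>
      straightWeight q ((u ∘ i.succAbove) i') (v j) *
        izerginMatrix q (u ∘ i.succAbove) (v ∘ j.succAbove) i' j' := by
  ext i' j'
  simp [izerginMatrix, prod_filter, Fin.prod_univ_succAbove _ j]

theorem det_izerginMatrix_submatrix_succAbove (q : R) {n : ℕ} (u v : Fin (n + 1) → R)
    (i j : Fin (n + 1)) :
    ((izerginMatrix q u v).submatrix i.succAbove j.succAbove).det =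
      (∏ i', straightWeight q ((u ∘ i.succAbove) i') (v j)) *
        (izerginMatrix q (u ∘ i.succAbove) (v ∘ j.succAbove)).det := by
  rw [izerginMatrix_submatrix_succAbove, det_mul_column]

theorem det_izerginMatrix_comp_perm (q : R) {n : ℕ} (u v : Fin n → R) (σ : Equiv.Perm (Fin n)) :
    (izerginMatrix q u (v ∘ σ)).det = Equiv.Perm.sign σ * (izerginMatrix q u v).det := by
  rw [← det_permute']
  congr 1
  ext i j
  simp only [izerginMatrix_apply, submatrix_apply, id_eq]
  exact prod_equiv σ (by simp) fun _ _ => rfl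

theorem map_straightWeight {S : Type*} [CommRing S] (f : R →+* S) (q u v : R) :
    f (straightWeight q u v) = straightWeight (f q) (f u) (f v) := by
  simp [straightWeight]

theorem map_det_izerginMatrix {S : Type*} [CommRing S] (f : R →+* S) (q : R) {n : ℕ}
    (u v : Fin n → R) :
    f (izerginMatrix q u v).det = (izerginMatrix (f q) (f ∘ u) (f ∘ v)).det := by
  rw [RingHom.map_det]
  congr 1
  ext i j
  simp [izerginMatrix, map_straightWeight]

namespace IzerginKorepin

theorem of_comp_perm [NoZeroDivisors R] {q : R} {n : ℕ} {u v : Fin n → R}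
    (hv : ∀ i j, q * v j - v i ≠ 0) (σ : Equiv.Perm (Fin n))
    (h : IzerginKorepin q u (v ∘ σ)) : IzerginKorepin q u v := by
  have hdet : (vandermonde (v ∘ σ)).det = Equiv.Perm.sign σ * (vandermonde v).det :=
    det_permute σ (vandermonde v)
  rw [IzerginKorepin, partition_comp_perm u hv, hdet, det_izerginMatrix_comp_perm] at h
  obtain hσ | hσ := Int.units_eq_one_or (Equiv.Perm.sign σ) <;>
    simpa only [IzerginKorepin, hσ, Units.val_one, Units.val_neg, Int.cast_one, Int.cast_neg,
      one_mul, neg_mul, mul_neg, neg_inj] using h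

theorem of_apply_eq (q : R) {n : ℕ} {u : Fin n → R} (v : Fin n → R) {i j : Fin n} (hij : i ≠ j)
    (h : u i = u j) : IzerginKorepin q u v := by
  have hV : vandermonde (-u) i = vandermonde (-u) j := by ext; simp [h]
  have hN : izerginMatrix q u v i = izerginMatrix q u v j := by ext; simp [izerginMatrix, h]
  rw [IzerginKorepin, det_zero_of_row_eq hij hV, det_zero_of_row_eq hij hN, mul_zero, zero_mul]

theorem det_izerginMatrix_vecCons_vecCons (q v : R) {n : ℕ} (u w : Fin n → R) :
    (izerginMatrix q (vecCons (q * v) u) (vecCons v w)).det =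
      (∏ i, straightWeight q (q * v) (w i)) * (∏ i, straightWeight q (u i) v) *
        (izerginMatrix q u w).det := by
  have hminor := det_izerginMatrix_submatrix_succAbove q (vecCons (q * v) u) (vecCons v w) 0 0
  rw [det_succ_row_zero, sum_eq_single 0]
  · simp only [Fin.succAbove_zero] at hminor
    rw [Fin.succAbove_zero, hminor]
    simp [izerginMatrix, prod_filter, Fin.prod_univ_succ, mul_assoc]
  · intro j _ hj
    have hzero : izerginMatrix q (vecCons (q * v) u) (vecCons v w) 0 j = 0 := by
      rw [izerginMatrix_apply]
      exact prod_eq_zero (i := 0) (by simpa using hj.symm) (by simp [straightWeight])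
    simp [hzero]
  · simp

theorem vecCons_vecCons {q : R} {n : ℕ} {u w : Fin n → R} (h : IzerginKorepin q u w) (v : R) :
    IzerginKorepin q (vecCons (q * v) u) (vecCons v w) := by
  have hprod : (∏ i, q * (u i - v)) * (∏ i, (q * v - w i)) * (∏ i, (-u i - -(q * v))) *
      (∏ i, (w i - v)) =
        (∏ i, straightWeight q (q * v) (w i)) * ∏ i, straightWeight q (u i) v := by
    simp only [← prod_mul_distrib, straightWeight]
    exact prod_congr rfl fun i _ => by ring
  rw [IzerginKorepin, partition_vecCons_vecCons, neg_cons, det_vandermonde_vecCons,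
    det_vandermonde_vecCons, det_izerginMatrix_vecCons_vecCons, ← hprod, ← h]
  simp only [Pi.neg_apply]
  ring

open Polynomial

theorem degree_left_lt [IsDomain R] (q : R) {n : ℕ} (u : Fin n → R) (v : Fin (n + 1) → R) :
    (partition (C q) (vecCons X (C ∘ u)) (C ∘ v) * (vandermonde (-vecCons X (C ∘ u))).det *
      (vandermonde (C ∘ v)).det).degree < (2 * n + 1 : ℕ) := by
  have hP := degree_partition_X_lt q u v
  have hX : (∏ i, (X - C (u i)) : R[X]).degree = n := by simp [degree_prod, degree_X_sub_C]
  have hneg : -(C ∘ u) = C ∘ (-u) := by ext1; simp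
  simp only [neg_cons, det_vandermonde_vecCons, Pi.neg_apply, Function.comp_apply,
    neg_sub_neg]
  rw [hneg, ← map_det_vandermonde, ← map_det_vandermonde]
  calc _ = (((vandermonde (-u)).det * (vandermonde v).det) •
          (partition (C q) (vecCons X (C ∘ u)) (C ∘ v) * ∏ i, (X - C (u i)))).degree := by
        rw [smul_eq_C_mul, C_mul]; ring_nf
    _ ≤ (partition (C q) (vecCons X (C ∘ u)) (C ∘ v)).degree + n :=
        (degree_smul_le _ _).trans_eq (by rw [degree_mul, hX])
    _ < (n + 1 : ℕ) + n := WithBot.add_lt_add_right (by simp) hP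
    _ = (2 * n + 1 : ℕ) := by norm_cast; ring_nf

theorem degree_right_lt [Nontrivial R] (q : R) {n : ℕ} (u : Fin n → R) (v : Fin (n + 1) → R) :
    (izerginMatrix (C q) (vecCons X (C ∘ u)) (C ∘ v)).det.degree < (2 * n + 1 : ℕ) := by
  have hentry (j) :
      (izerginMatrix (C q) (vecCons X (C ∘ u)) (C ∘ v) 0 j).degree ≤ (2 * n : ℕ) := by
    have hfactor (k) : (straightWeight (C q) X (C (v k))).degree ≤ 2 := by
      rw [straightWeight, ← C_mul]
      refine (degree_mul_le _ _).trans_eq ?_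
      rw [degree_X_sub_C, degree_X_sub_C, one_add_one_eq_two]
    rw [izerginMatrix_apply]
    refine (degree_prod_le _ _).trans ((sum_le_card_nsmul _ _ 2 fun k _ => hfactor k).trans_eq ?_)
    simp [filter_ne', mul_comm]
  have hminor (j : Fin (n + 1)) :
      (izerginMatrix (C q) (vecCons X (C ∘ u)) (C ∘ v)).submatrix Fin.succ j.succAbove =
        C.mapMatrix ((izerginMatrix q (vecCons 0 u) v).submatrix Fin.succ j.succAbove) := by
    ext1 i k
    simp [izerginMatrix, map_straightWeight]
  rw [det_succ_row_zero, ← mem_degreeLT]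
  refine Submodule.sum_mem _ fun j _ => ?_
  have hsmul (p : R[X]) (d : R) : (-1) ^ (j : ℕ) * p * C d = ((-1) ^ (j : ℕ) * d) • p := by
    rw [smul_eq_C_mul, C_mul, C_pow, C_neg, C_1]
    ring
  rw [hminor, ← RingHom.map_det, hsmul, mem_degreeLT]
  exact ((degree_smul_le _ _).trans (hentry j)).trans_lt (by exact_mod_cast Nat.lt_succ_self _)

theorem eval_eq_eval_iff {q t : R} {n : ℕ} {u : Fin n → R} {v : Fin (n + 1) → R} :
    (partition (C q) (vecCons X (C ∘ u)) (C ∘ v) * (vandermonde (-vecCons X (C ∘ u))).det *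
        (vandermonde (C ∘ v)).det).eval t =
      (izerginMatrix (C q) (vecCons X (C ∘ u)) (C ∘ v)).det.eval t ↔
        IzerginKorepin q (vecCons t u) v := by
  have hC {m : ℕ} (w : Fin m → R) : evalRingHom t ∘ C ∘ w = w := by ext1; simp
  have hu : evalRingHom t ∘ vecCons X (C ∘ u) = vecCons t u := by
    rw [vecCons_comp, hC, coe_evalRingHom, eval_X]
  have hneg : evalRingHom t ∘ (-vecCons X (C ∘ u)) = -vecCons t u := by
    rw [← hu]
    exact funext fun _ => map_neg (evalRingHom t) _
  rw [← coe_evalRingHom, map_mul, map_mul, map_partition, map_det_vandermonde,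
    map_det_vandermonde, map_det_izerginMatrix, hu, hneg, hC, coe_evalRingHom, eval_C,
    IzerginKorepin]

theorem of_generic [IsDomain R] {q : R} {n : ℕ} {u v : Fin n → R} (h : Generic q u v) :
    IzerginKorepin q u v := by
  induction n with
  | zero => simp [IzerginKorepin, partition, partitionFrom_nil, Subsingleton.elim (fun _ => true)
      (fun _ => false : Fin 0 → Bool)]
  | succ n ih =>
    have hu : Function.Injective (vecTail u) := h.injective_left.comp (Fin.succ_injective n)
    have at_left (i : Fin n) : IzerginKorepin q (vecCons (vecTail u i) (vecTail u)) v :=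
      of_apply_eq q v (Fin.succ_ne_zero i) rfl
    have at_right (j : Fin (n + 1)) : IzerginKorepin q (vecCons (q * v j) (vecTail u)) v := by
      refine of_comp_perm h.mul_sub_ne_zero (Equiv.swap 0 j) ?_
      rw [← cons_head_tail (v ∘ Equiv.swap 0 j),
        show vecHead (v ∘ Equiv.swap 0 j) = v j by simp [vecHead]]
      exact vecCons_vecCons (ih (h.comp (Fin.succ_injective n)
        ((Equiv.swap 0 j).injective.comp (Fin.succ_injective n)))) _
    have hnodes : Function.Injective (Sum.elim (vecTail u) fun j => q * v j) :=
      hu.sumElim (fun i j hij => h.injective_right (mul_left_cancel₀ h.q_ne_zero hij))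
        fun i j hij => h.straightWeight_ne_zero i.succ j <| by
          rw [straightWeight, ← hij]
          exact mul_eq_zero_of_left (sub_self _) _
    have hcard : #(univ : Finset (Fin n ⊕ Fin (n + 1))) = 2 * n + 1 := by simp; ring
    have key := eq_of_degrees_lt_of_eval_index_eq univ hnodes.injOn
      (by rw [hcard]; exact degree_left_lt q (vecTail u) v)
      (by rw [hcard]; exact degree_right_lt q (vecTail u) v)
      fun i _ => eval_eq_eval_iff.2 (i.casesOn at_left at_right)
    rw [← cons_head_tail u]
    exact eval_eq_eval_iff.1 (congrArg _ key)

end IzerginKorepin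

end IzerginKorepin

end SixVertex

section Condensation

variable {R : Type*} [CommRing R]

/- Replacing the columns of `M` indexed by `m` by those of `M.adjugate` and the remaining ones by
unit vectors gives a block triangular matrix, whose product with `M` is again block triangular. -/
theorem det_mul_det_adjugate_toBlocks₁₁ {m n : Type*} [Fintype m] [Fintype n] [DecidableEq m]
    [DecidableEq n] (M : Matrix (m ⊕ n) (m ⊕ n) R) :
    M.det * M.adjugate.toBlocks₁₁.det = M.det ^ Fintype.card m * M.toBlocks₂₂.det := by
  have hcols : M * fromBlocks M.adjugate.toBlocks₁₁ 0 M.adjugate.toBlocks₂₁ 1 =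
      fromBlocks (M.det • 1) M.toBlocks₁₂ 0 M.toBlocks₂₂ := by
    have h := M.mul_adjugate
    rw [← fromBlocks_one, fromBlocks_smul] at h
    nth_rw 1 [← fromBlocks_toBlocks M, ← fromBlocks_toBlocks M.adjugate] at h
    rw [fromBlocks_multiply, fromBlocks_inj] at h
    nth_rw 1 [← fromBlocks_toBlocks M]
    rw [fromBlocks_multiply, h.1, h.2.2.1]
    simp
  simpa [det_smul] using congrArg det hcols

theorem det_mul_adjugate_minor {n : ℕ} (M : Matrix (Fin (n + 2)) (Fin (n + 2)) R) :
    M.det * (M.adjugate 0 0 * M.adjugate 1 1 - M.adjugate 0 1 * M.adjugate 1 0) =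
      M.det * (M.det * (M.submatrix (Fin.succ ∘ Fin.succ) (Fin.succ ∘ Fin.succ)).det) := by
  let e : Fin 2 ⊕ Fin n ≃ Fin (n + 2) := finSumFinEquiv.trans (finCongr (add_comm 2 n))
  have he : e ∘ Sum.inr = Fin.succ ∘ Fin.succ := by
    ext i
    simp [e, add_assoc]
  have h := det_mul_det_adjugate_toBlocks₁₁ (M.submatrix e e)
  have h₂₂ : (M.submatrix e e).toBlocks₂₂ =
      M.submatrix (Fin.succ ∘ Fin.succ) (Fin.succ ∘ Fin.succ) := by
    rw [← he]
    rfl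
  rw [det_submatrix_equiv_self, h₂₂, adjugate_submatrix_equiv_self, det_fin_two, Fintype.card_fin,
    sq, mul_assoc] at h
  exact h

/-- The **Desnanot–Jacobi identity**. -/
theorem det_mul_det_submatrix_succ_succ {n : ℕ} (M : Matrix (Fin (n + 2)) (Fin (n + 2)) R) :
    M.det * (M.submatrix (Fin.succ ∘ Fin.succ) (Fin.succ ∘ Fin.succ)).det =
      (M.submatrix (Fin.succAbove 0) (Fin.succAbove 0)).det *
          (M.submatrix (Fin.succAbove 1) (Fin.succAbove 1)).det -
        (M.submatrix (Fin.succAbove 0) (Fin.succAbove 1)).det *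
          (M.submatrix (Fin.succAbove 1) (Fin.succAbove 0)).det := by
  have hX := mul_left_cancel₀ (det_mvPolynomialX_ne_zero (Fin (n + 2)) ℤ)
    (det_mul_adjugate_minor (mvPolynomialX (Fin (n + 2)) (Fin (n + 2)) ℤ))
  have hM : (mvPolynomialX (Fin (n + 2)) (Fin (n + 2)) ℤ).map
      (MvPolynomial.eval₂Hom (Int.castRingHom R) fun p => M p.1 p.2) = M :=
    mvPolynomialX_map_eval₂ _ _
  replace hX := congrArg (MvPolynomial.eval₂Hom (Int.castRingHom R) fun p => M p.1 p.2) hX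
  simp only [adjugate_fin_succ_eq_det_submatrix, map_mul, map_sub, RingHom.map_det,
    RingHom.mapMatrix_apply, ← submatrix_map, hM, map_pow, map_neg, map_one] at hX
  rw [← hX]
  simp
  ring

end Condensation

theorem vecCons_vecCons_comp_succAbove_one {α : Type*} {n : ℕ} (a b : α) (u : Fin n → α) :
    vecCons a (vecCons b u) ∘ Fin.succAbove 1 = vecCons a u := by
  ext i
  cases i using Fin.cases with
  | zero => rfl
  | succ i =>
    rw [Function.comp_apply, ← Fin.succ_zero_eq_one, Fin.succ_succAbove_succ]
    rfl

theorem det_vandermonde_vecCons_vecCons {R : Type*} [CommRing R] {n : ℕ} (a b : R)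
    (u : Fin n → R) :
    (vandermonde (vecCons a (vecCons b u))).det * (vandermonde u).det =
      (b - a) * (vandermonde (vecCons a u)).det * (vandermonde (vecCons b u)).det := by
  simp only [det_vandermonde_vecCons, Fin.prod_univ_succ, cons_val_zero, cons_val_succ]
  ring

namespace SixVertex

section Bilinear

variable {R : Type*} [CommRing R]

theorem det_izerginMatrix_submatrix_succ_succ (q : R) {n : ℕ} (a b c d : R) (u v : Fin n → R) :
    ((izerginMatrix q (vecCons a (vecCons b u)) (vecCons c (vecCons d v))).submatrix
        (Fin.succ ∘ Fin.succ) (Fin.succ ∘ Fin.succ)).det =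
      (∏ i, straightWeight q (u i) c) * (∏ i, straightWeight q (u i) d) *
        (izerginMatrix q u v).det := by
  rw [← prod_mul_distrib, ← det_mul_column]
  congr 1
  ext i j
  have h₀ : (0 : Fin (n + 2)) ≠ j.succ.succ := (Fin.succ_ne_zero _).symm
  have h₁ : (1 : Fin (n + 2)) ≠ j.succ.succ := by simp [Fin.ext_iff]
  simp [izerginMatrix, prod_filter, Fin.prod_univ_succ, mul_assoc, h₀, h₁]

theorem det_izerginMatrix_condensation [IsDomain R] {q : R} {n : ℕ} {a b c d : R}
    {u v : Fin n → R} (h : Generic q (vecCons a (vecCons b u)) (vecCons c (vecCons d v))) :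
    (izerginMatrix q (vecCons a (vecCons b u)) (vecCons c (vecCons d v))).det *
        (izerginMatrix q u v).det =
      straightWeight q a d * straightWeight q b c *
          (izerginMatrix q (vecCons b u) (vecCons d v)).det *
          (izerginMatrix q (vecCons a u) (vecCons c v)).det -
        straightWeight q a c * straightWeight q b d *
          (izerginMatrix q (vecCons b u) (vecCons c v)).det *
          (izerginMatrix q (vecCons a u) (vecCons d v)).det := by
  have hprod : (∏ i, straightWeight q (u i) c) * ∏ i, straightWeight q (u i) d ≠ 0 :=
    mul_ne_zero (prod_ne_zero_iff.2 fun i _ => h.straightWeight_ne_zero i.succ.succ 0)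
      (prod_ne_zero_iff.2 fun i _ => h.straightWeight_ne_zero i.succ.succ 1)
  have hzero {m : ℕ} (x : R) (w : Fin m → R) : vecCons x w ∘ Fin.succAbove 0 = w := rfl
  have jacobi := det_mul_det_submatrix_succ_succ
    (izerginMatrix q (vecCons a (vecCons b u)) (vecCons c (vecCons d v)))
  simp only [det_izerginMatrix_submatrix_succ_succ, det_izerginMatrix_submatrix_succAbove,
    vecCons_vecCons_comp_succAbove_one, hzero, Fin.prod_univ_succ, cons_val_zero, cons_val_one,
    cons_val_succ] at jacobi
  refine mul_left_cancel₀ hprod ?_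
  linear_combination jacobi

theorem Generic.of_vecCons_vecCons {q : R} {n : ℕ} {a b c d : R} {u v : Fin n → R}
    (h : Generic q (vecCons a (vecCons b u)) (vecCons c (vecCons d v))) :
    Generic q u v ∧ Generic q (vecCons b u) (vecCons d v) ∧ Generic q (vecCons a u) (vecCons c v) ∧
      Generic q (vecCons b u) (vecCons c v) ∧ Generic q (vecCons a u) (vecCons d v) := by
  have hs := Fin.succ_injective (n + 1)
  have h₁ := Fin.succAbove_right_injective (p := (1 : Fin (n + 2)))
  have h₂ := hs.comp (Fin.succ_injective n)
  have hac := h.comp h₁ h₁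
  have hbc := h.comp hs h₁
  have had := h.comp h₁ hs
  rw [vecCons_vecCons_comp_succAbove_one] at hac hbc had
  rw [vecCons_vecCons_comp_succAbove_one] at hac
  exact ⟨h.comp h₂ h₂, h.comp hs hs, hac, hbc, had⟩

theorem Generic.partition_bilinear [IsDomain R] {q : R} {n : ℕ} {a b c d : R} {u v : Fin n → R}
    (h : Generic q (vecCons a (vecCons b u)) (vecCons c (vecCons d v))) :
    (a - b) * (d - c) * partition q (vecCons a (vecCons b u)) (vecCons c (vecCons d v)) *
        partition q u v =
      straightWeight q a d * straightWeight q b c * partition q (vecCons b u) (vecCons d v) *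
          partition q (vecCons a u) (vecCons c v) -
        straightWeight q a c * straightWeight q b d * partition q (vecCons b u) (vecCons c v) *
          partition q (vecCons a u) (vecCons d v) := by
  obtain ⟨h₂, hbd, hac, hbc, had⟩ := h.of_vecCons_vecCons
  have hdet {m : ℕ} {u v : Fin m → R} (h : Generic q u v) :
      (vandermonde (-u)).det * (vandermonde v).det ≠ 0 :=
    mul_ne_zero (det_vandermonde_ne_zero_iff.2 (neg_injective.comp h.injective_left))
      (det_vandermonde_ne_zero_iff.2 h.injective_right)
  have ik {m : ℕ} {u v : Fin m → R} (h : Generic q u v) : (izerginMatrix q u v).det =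
      partition q u v * (vandermonde (-u)).det * (vandermonde v).det :=
    (IzerginKorepin.of_generic h).symm
  have condensation := det_izerginMatrix_condensation h
  rw [ik h, ik h₂, ik hbd, ik hac, ik hbc, ik had] at condensation
  have hu := det_vandermonde_vecCons_vecCons (-a) (-b) (-u)
  have hv := det_vandermonde_vecCons_vecCons c d v
  simp only [← neg_cons] at hu
  refine mul_left_cancel₀ (mul_ne_zero (hdet hac) (hdet hbd)) ?_
  linear_combination condensation -
    partition q (vecCons a (vecCons b u)) (vecCons c (vecCons d v)) * partition q u v *
    ((vandermonde (vecCons c (vecCons d v))).det * (vandermonde v).det * hu +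
      (-b - -a) * (vandermonde (-vecCons a u)).det * (vandermonde (-vecCons b u)).det * hv)

open MvPolynomial in
theorem generic_X (n : ℕ) :
    Generic (X none : MvPolynomial (Option (Fin n ⊕ Fin n)) ℤ) (fun i => X (some (Sum.inl i)))
      fun i => X (some (Sum.inr i)) := by
  have hX := X_injective (R := ℤ) (σ := Option (Fin n ⊕ Fin n))
  have ne_zero {p : MvPolynomial (Option (Fin n ⊕ Fin n)) ℤ} (i)
      (hp : eval (Pi.single i 1) p ≠ 0) : p ≠ 0 := by
    rintro rfl
    exact hp (map_zero _)
  exact {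
    q_ne_zero := X_ne_zero _
    injective_left := hX.comp ((Option.some_injective _).comp Sum.inl_injective)
    injective_right := hX.comp ((Option.some_injective _).comp Sum.inr_injective)
    mul_sub_ne_zero i j := ne_zero (some (Sum.inr i)) (by simp)
    straightWeight_ne_zero i j := ne_zero (some (Sum.inl i)) (by simp [straightWeight]) }

theorem partition_bilinear (q : R) {n : ℕ} (a b c d : R) (u v : Fin n → R) :
    (a - b) * (d - c) * partition q (vecCons a (vecCons b u)) (vecCons c (vecCons d v)) *
        partition q u v =
      straightWeight q a d * straightWeight q b c * partition q (vecCons b u) (vecCons d v) *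
          partition q (vecCons a u) (vecCons c v) -
        straightWeight q a c * straightWeight q b d * partition q (vecCons b u) (vecCons c v) *
          partition q (vecCons a u) (vecCons d v) := by
  let U (i : Fin (n + 2)) : MvPolynomial (Option (Fin (n + 2) ⊕ Fin (n + 2))) ℤ :=
    .X (some (Sum.inl i))
  let V (i : Fin (n + 2)) : MvPolynomial (Option (Fin (n + 2) ⊕ Fin (n + 2))) ℤ :=
    .X (some (Sum.inr i))
  let f := MvPolynomial.eval₂Hom (Int.castRingHom R) fun o : Option (Fin (n + 2) ⊕ Fin (n + 2)) =>
    o.elim q (Sum.elim (vecCons a (vecCons b u)) (vecCons c (vecCons d v)))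
  have hq : f (.X none) = q := MvPolynomial.eval₂Hom_X' _ _ _
  have hU : f ∘ U = vecCons a (vecCons b u) := funext fun _ => MvPolynomial.eval₂Hom_X' _ _ _
  have hV : f ∘ V = vecCons c (vecCons d v) := funext fun _ => MvPolynomial.eval₂Hom_X' _ _ _
  have generic : Generic (.X none) U V := generic_X (n + 2)
  rw [← cons_head_tail U, ← cons_head_tail (vecTail U), ← cons_head_tail V,
    ← cons_head_tail (vecTail V)] at generic
  have key := congrArg f generic.partition_bilinear
  simp only [map_mul, map_sub, map_partition, map_straightWeight, vecCons_comp, hq] at key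
  have hhead {m : ℕ} (w : Fin (m + 1) → _) : f (vecHead w) = vecHead (f ∘ w) := rfl
  have htail {m : ℕ} (w : Fin (m + 1) → _) : f ∘ vecTail w = vecTail (f ∘ w) := rfl
  simpa only [hhead, htail, hU, hV, head_cons, tail_cons] using key

end Bilinear

end SixVertex

section PartialSums

variable {n : ℕ}

/-- The sum of the entries of `A` to the right of the entry at `(i, j)`. For an alternating sign
matrix it tells whether the edge to the right of the vertex at `(i, j)` carries a path. -/
def rightSum (A : Fin n → Fin n → ℤ) (i j : Fin n) : ℤ :=
  ∑ k ∈ Ioi j, A i k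

/-- The sum of the entries of `A` below the entry at `(i, j)`. For an alternating sign matrix it
tells whether the edge below the vertex at `(i, j)` carries a path. -/
def belowSum (A : Fin n → Fin n → ℤ) (i j : Fin n) : ℤ :=
  ∑ k ∈ Ioi i, A k j

theorem sum_filter_le_add_sum_Ioi (f : Fin n → ℤ) (j : Fin n) :
    ∑ k with k ≤ j, f k + ∑ k ∈ Ioi j, f k = ∑ k, f k := by
  rw [← sum_filter_add_sum_filter_not univ (· ≤ j)]
  simp only [not_le, filter_lt_eq_Ioi]

theorem add_sum_Ioi_mem {f : Fin n → ℤ} (hsum : ∑ k, f k = 1)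
    (h : ∀ j, ∑ k ∈ Ioi j, f k = 0 ∨ ∑ k ∈ Ioi j, f k = 1) (j : Fin n) :
    f j + ∑ k ∈ Ioi j, f k = 0 ∨ f j + ∑ k ∈ Ioi j, f k = 1 := by
  cases n with
  | zero => exact j.elim0
  | succ n =>
    cases j using Fin.cases with
    | zero =>
      rw [Fin.sum_Ioi_zero, ← Fin.sum_univ_succ]
      exact Or.inr hsum
    | succ j =>
      have hj : Ici j.succ = Ioi j.castSucc := by
        ext
        simp [Fin.castSucc_lt_iff_succ_le]
      rw [add_sum_Ioi_eq_sum_Ici, hj]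
      exact h _

variable {A : Fin n → Fin n → ℤ}

theorem isASM_iff : IsASM A ↔ (∀ i j, A i j = -1 ∨ A i j = 0 ∨ A i j = 1) ∧
    (∀ i j, rightSum A i j = 0 ∨ rightSum A i j = 1) ∧
    (∀ i j, belowSum A i j = 0 ∨ belowSum A i j = 1) ∧
    (∀ i, ∑ j, A i j = 1) ∧ ∀ j, ∑ i, A i j = 1 := by
  have hcomplement {f : Fin n → ℤ} (hf : ∑ k, f k = 1) (j : Fin n) :
      (∑ k with k ≤ j, f k = 0 ∨ ∑ k with k ≤ j, f k = 1) ↔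
        (∑ k ∈ Ioi j, f k = 0 ∨ ∑ k ∈ Ioi j, f k = 1) := by
    have := sum_filter_le_add_sum_Ioi f j
    lia
  constructor
  · rintro ⟨hA, hrow, hcol, hr, hc⟩
    exact ⟨hA, fun i j => (hcomplement (hr i) j).1 (hrow i j),
      fun i j => (hcomplement (hc j) i).1 (hcol i j), hr, hc⟩
  · rintro ⟨hA, hrow, hcol, hr, hc⟩
    exact ⟨hA, fun i j => (hcomplement (hr i) j).2 (hrow i j),
      fun i j => (hcomplement (hc j) i).2 (hcol i j), hr, hc⟩

namespace IsASM

theorem sum_row (h : IsASM A) (i : Fin n) : ∑ j, A i j = 1 :=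
  h.2.2.2.1 i

theorem transpose (h : IsASM A) : IsASM fun i j => A j i :=
  ⟨fun i j => h.1 j i, fun i j => h.2.2.1 j i, fun i j => h.2.1 j i, h.2.2.2.2, h.2.2.2.1⟩

theorem rightSum_mem (h : IsASM A) (i j : Fin n) : rightSum A i j = 0 ∨ rightSum A i j = 1 :=
  (isASM_iff.1 h).2.1 i j

theorem belowSum_mem (h : IsASM A) (i j : Fin n) : belowSum A i j = 0 ∨ belowSum A i j = 1 :=
  h.transpose.rightSum_mem j i

theorem add_rightSum_mem (h : IsASM A) (i j : Fin n) :
    A i j + rightSum A i j = 0 ∨ A i j + rightSum A i j = 1 :=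
  add_sum_Ioi_mem (h.sum_row i) (h.rightSum_mem i) j

theorem add_belowSum_mem (h : IsASM A) (i j : Fin n) :
    A i j + belowSum A i j = 0 ∨ A i j + belowSum A i j = 1 :=
  h.transpose.add_rightSum_mem j i

theorem rightSum_toNat_eq_ite (h : IsASM A) (i j : Fin n) :
    (rightSum A i j).toNat = if rightSum A i j = 1 then 1 else 0 := by
  rcases h.rightSum_mem i j with hr | hr <;> simp [hr]

end IsASM

end PartialSums

theorem sum_ite_eq_of_injective {α β M : Type*} [Fintype α] [DecidableEq β] [AddCommMonoid M]
    {φ : α → β} (hφ : Function.Injective φ) (g : β → M) {s : β}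
    (hs : (∀ a, φ a ≠ s) → g s = 0) : ∑ a, (if φ a = s then g (φ a) else 0) = g s := by
  by_cases h : ∃ a, φ a = s
  · obtain ⟨a, rfl⟩ := h
    rw [Fintype.sum_eq_single a fun b hb => if_neg (hφ.ne hb), if_pos rfl]
  · push Not at h
    rw [hs h]
    exact sum_eq_zero fun a _ => if_neg (h a)

namespace SixVertex

section StateSum

theorem toInt_injective : Function.Injective Bool.toInt := by
  decide

variable {R : Type*} [CommRing R]

/-- The entry of an alternating sign matrix encoded by an element of `Fin 3`, as in `asmMat`. -/
def entry (a : Fin 3) : ℤ :=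
  (a : ℤ) - 1

/-- The weight of the vertex at an entry `a` of an alternating sign matrix, given the sums `r` and
`d` of the entries to the right and below. -/
def entryWeight (q u v : R) (a r d : ℤ) : R :=
  if (a + r = 0 ∨ a + r = 1) ∧ (r = 0 ∨ r = 1) ∧ (a + d = 0 ∨ a + d = 1) ∧ (d = 0 ∨ d = 1) then
    vertexWeight q u v (a + r = 1) (r = 1) (a + d = 1) (d = 1)
  else 0

theorem mem_of_entryWeight_ne_zero {q u v : R} {a r d : ℤ} (h : entryWeight q u v a r d ≠ 0) :
    (r = 0 ∨ r = 1) ∧ (d = 0 ∨ d = 1) := by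
  rw [entryWeight, ne_eq, ite_eq_right_iff, Classical.not_imp] at h
  exact ⟨h.1.2.1, h.1.2.2.2⟩

theorem exists_toInt_eq {m : ℤ} (h : m = 0 ∨ m = 1) : ∃ b : Bool, b.toInt = m :=
  h.elim (fun h => ⟨false, h.symm⟩) fun h => ⟨true, h.symm⟩

theorem vertexWeight_eq_sum (q u v : R) (l r t d : Bool) :
    vertexWeight q u v l r t d = ∑ a : Fin 3,
      if l.toInt = entry a + r.toInt ∧ t.toInt = entry a + d.toInt then
        entryWeight q u v (entry a) r.toInt d.toInt else 0 := by
  rw [Fin.sum_univ_three]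
  cases l <;> cases r <;> cases t <;> cases d <;> simp [entryWeight, entry, vertexWeight]

theorem columnMatrix_eq_sum (q v : R) {n : ℕ} (u : Fin n → R) (l r : Fin n → Bool) (t : Bool) :
    columnMatrix q u v l r t false = ∑ a : Fin n → Fin 3,
      if (∀ i, (l i).toInt = entry (a i) + (r i).toInt) ∧ t.toInt = ∑ i, entry (a i) then
        ∏ i, entryWeight q (u i) v (entry (a i)) (r i).toInt (∑ k ∈ Ioi i, entry (a k))
      else 0 := by
  induction n generalizing t with
  | zero => cases t <;> simp [columnMatrix_zero]
  | succ n ih =>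
    simp only [columnMatrix_succ, mul_apply, of_apply, ih, vertexWeight_eq_sum q (u 0), sum_mul_sum,
      sum_vecCons]
    rw [sum_comm]
    refine sum_congr rfl fun a₀ _ => ?_
    rw [sum_comm]
    refine sum_congr rfl fun a _ => ?_
    simp only [Fin.forall_fin_succ, Fin.prod_univ_succ, Fin.sum_univ_succ, Fin.sum_Ioi_zero,
      Fin.sum_Ioi_succ, cons_val_zero, cons_val_succ, vecTail, Function.comp_apply]
    set W := ∏ i : Fin n, entryWeight q (u i.succ) v (entry (a i)) (r i.succ).toInt
      (∑ k ∈ Ioi i, entry (a k))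
    set s := ∑ i, entry (a i)
    have key := sum_ite_eq_of_injective toInt_injective (s := s) (fun d : ℤ =>
      if ((l 0).toInt = entry a₀ + (r 0).toInt ∧
          ∀ i : Fin n, (l i.succ).toInt = entry (a i) + (r i.succ).toInt) ∧
          t.toInt = entry a₀ + d then
        entryWeight q (u 0) v (entry a₀) (r 0).toInt d * W else 0) fun hs => by
      have : entryWeight q (u 0) v (entry a₀) (r 0).toInt s = 0 := by
        by_contra hne
        obtain ⟨b, hb⟩ := exists_toInt_eq (mem_of_entryWeight_ne_zero hne).2
        exact hs b hb
      rw [this, zero_mul, ite_self]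
    rw [← key]
    refine sum_congr rfl fun d _ => ?_
    simp only [ite_mul, zero_mul, ← ite_and]
    split_ifs <;> grind

theorem partitionFrom_eq_sum (q : R) {m n : ℕ} (u : Fin n → R) (v : Fin m → R)
    (l : Fin n → Bool) :
    partitionFrom q u (List.ofFn v) l = ∑ f : Fin m → Fin n → Fin 3,
      if (∀ i, (l i).toInt = ∑ j, entry (f j i)) ∧ ∀ j, ∑ i, entry (f j i) = 1 then
        ∏ j, ∏ i, entryWeight q (u i) (v j) (entry (f j i))
          (∑ k ∈ Ioi j, entry (f k i)) (∑ k ∈ Ioi i, entry (f j k))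
      else 0 := by
  induction m generalizing l with
  | zero =>
    have hl : l = (fun _ => false) ↔ ∀ i, (l i).toInt = 0 := by
      rw [funext_iff]
      exact forall_congr' fun i => (toInt_injective.eq_iff (b := false)).symm
    simp [partitionFrom_nil, hl]
  | succ m ih =>
    simp only [List.ofFn_succ, partitionFrom_cons, ih, columnMatrix_eq_sum, sum_mul_sum,
      sum_vecCons]
    rw [sum_comm]
    refine sum_congr rfl fun a _ => ?_
    rw [sum_comm]
    refine sum_congr rfl fun f _ => ?_
    simp only [Fin.forall_fin_succ, Fin.prod_univ_succ, Fin.sum_univ_succ, Fin.sum_Ioi_zero,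
      Fin.sum_Ioi_succ, cons_val_zero, cons_val_succ]
    set W := ∏ j : Fin m, ∏ i, entryWeight q (u i) (v j.succ) (entry (f j i))
      (∑ k ∈ Ioi j, entry (f k i)) (∑ k ∈ Ioi i, entry (f j k))
    have key := sum_ite_eq_of_injective toInt_injective.comp_left
      (s := fun i => ∑ j, entry (f j i)) (fun r : Fin n → ℤ =>
        if (∀ i, (l i).toInt = entry (a i) + r i) ∧ ∑ i, entry (a i) = 1 ∧
            ∀ j, ∑ i, entry (f j i) = 1 then
          (∏ i, entryWeight q (u i) (v 0) (entry (a i)) (r i) (∑ k ∈ Ioi i, entry (a k))) * W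
        else 0) fun hs => by
      suffices ∏ i, entryWeight q (u i) (v 0) (entry (a i)) (∑ j, entry (f j i))
          (∑ k ∈ Ioi i, entry (a k)) = 0 by rw [this, zero_mul, ite_self]
      by_contra hne
      have hex (i) := exists_toInt_eq
        (mem_of_entryWeight_ne_zero fun h0 => hne (prod_eq_zero (mem_univ i) h0)).1
      choose r hr using hex
      exact hs r (funext hr)
    rw [← key]
    refine sum_congr rfl fun r _ => ?_
    simp only [ite_mul, zero_mul, mul_ite, mul_zero, ← ite_and]
    simp only [funext_iff, Function.comp_apply, Bool.toInt_true]
    split_ifs <;> grind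

theorem isASM_asmMat_of_prod_entryWeight_ne_zero {n : ℕ} {q : R} {u v : Fin n → R}
    {e : Fin n → Fin n → Fin 3} (hr : ∀ i, ∑ j, asmMat e i j = 1)
    (hc : ∀ j, ∑ i, asmMat e i j = 1)
    (h : ∏ i, ∏ j, entryWeight q (u i) (v j) (asmMat e i j) (rightSum (asmMat e) i j)
      (belowSum (asmMat e) i j) ≠ 0) : IsASM (asmMat e) := by
  have hmem (i j) := mem_of_entryWeight_ne_zero fun h0 =>
    h (prod_eq_zero (mem_univ i) (prod_eq_zero (mem_univ j) h0))
  refine isASM_iff.2 ⟨fun i j => ?_, fun i j => (hmem i j).1, fun i j => (hmem i j).2, hr, hc⟩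
  change (e i j : ℤ) - 1 = -1 ∨ (e i j : ℤ) - 1 = 0 ∨ (e i j : ℤ) - 1 = 1
  have := (e i j).isLt
  lia

open Classical in
theorem partition_eq_sum {n : ℕ} (q : R) (u v : Fin n → R) :
    partition q u v = ∑ e : Fin n → Fin n → Fin 3,
      if IsASM (asmMat e) then
        ∏ i, ∏ j, entryWeight q (u i) (v j) (asmMat e i j) (rightSum (asmMat e) i j)
          (belowSum (asmMat e) i j)
      else 0 := by
  rw [partition, partitionFrom_eq_sum, ← (Equiv.piComm fun _ _ => Fin 3).sum_comp]
  refine sum_congr rfl fun e _ => ?_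
  rw [prod_comm]
  change (if (∀ i, 1 = ∑ j, asmMat e i j) ∧ ∀ j, ∑ i, asmMat e i j = 1 then
    ∏ i, ∏ j, entryWeight q (u i) (v j) (asmMat e i j) (rightSum (asmMat e) i j)
      (belowSum (asmMat e) i j) else 0) = _
  by_cases hA : IsASM (asmMat e)
  · rw [if_pos hA, if_pos ⟨fun i => (hA.sum_row i).symm, hA.2.2.2.2⟩]
  · rw [if_neg hA, ite_eq_right_iff]
    intro h
    by_contra hne
    exact hA (isASM_asmMat_of_prod_entryWeight_ne_zero (fun i => (h.1 i).symm) h.2 hne)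

end StateSum

end SixVertex

section Statistics

variable {n : ℕ} {A : Fin n → Fin n → ℤ}

theorem sum_inversions (A : Fin n → Fin n → ℤ) :
    (∑ i, ∑ i', ∑ j, ∑ j', if i < i' ∧ j' ≤ j then A i j * A i' j' else 0) =
      ∑ i, ∑ j, (A i j + rightSum A i j) * belowSum A i j := by
  refine sum_congr rfl fun i _ => ?_
  calc ∑ i', ∑ j, ∑ j', (if i < i' ∧ j' ≤ j then A i j * A i' j' else 0)
      = ∑ j, ∑ j', ∑ i', (if i < i' ∧ j' ≤ j then A i j * A i' j' else 0) := by
        rw [sum_comm]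
        exact sum_congr rfl fun j _ => sum_comm
    _ = ∑ j', ∑ j, ∑ i', (if i < i' ∧ j' ≤ j then A i j * A i' j' else 0) := sum_comm
    _ = ∑ j', (A i j' + rightSum A i j') * belowSum A i j' := by
        refine sum_congr rfl fun j' _ => ?_
        rw [rightSum, belowSum, add_sum_Ioi_eq_sum_Ici, sum_mul_sum]
        simp only [← filter_le_eq_Ici, ← filter_lt_eq_Ioi, sum_filter]
        refine sum_congr rfl fun j _ => ?_
        split_ifs with h <;> simp [h]

theorem muASM_eq_sum (A : Fin n → Fin n → ℤ) :
    muASM A = ∑ i, ∑ j, if A i j = -1 then 1 else 0 := by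
  rw [muASM, card_filter, Fintype.sum_prod_type]

theorem muASM_transpose (A : Fin n → Fin n → ℤ) : muASM (fun i j => A j i) = muASM A := by
  simp only [muASM_eq_sum]
  exact sum_comm

namespace IsASM

theorem sum_rightSum (h : IsASM A) : ∑ i, ∑ j, rightSum A i j = n.choose 2 := by
  calc ∑ i, ∑ j, rightSum A i j
      = ∑ j, ∑ k ∈ Ioi j, ∑ i, A i k := by
        rw [sum_comm]
        exact sum_congr rfl fun j _ => sum_comm
    _ = ((∑ j : Fin n, #(Ioi j) : ℕ) : ℤ) := by simp [h.2.2.2.2]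
    _ = n.choose 2 := by
        simp only [Fin.card_Ioi]
        rw [Fin.sum_univ_eq_sum_range fun j => n - 1 - j, sum_range_reflect fun j => j,
          sum_range_id, Nat.choose_two_right]

theorem sum_belowSum (h : IsASM A) : ∑ i, ∑ j, belowSum A i j = n.choose 2 := by
  rw [sum_comm]
  exact h.transpose.sum_rightSum

theorem mul_rightSum_eq_mul_belowSum (h : IsASM A) (i j : Fin n) :
    A i j * rightSum A i j = A i j * belowSum A i j := by
  have hr := h.rightSum_mem i j
  have hd := h.belowSum_mem i j
  have hl := h.add_rightSum_mem i j
  have ht := h.add_belowSum_mem i j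
  rcases h.1 i j with ha | ha | ha <;> grind

theorem mul_belowSum_nonneg (h : IsASM A) (i j : Fin n) :
    0 ≤ (A i j + rightSum A i j) * belowSum A i j := by
  have hl := h.add_rightSum_mem i j
  have hd := h.belowSum_mem i j
  exact mul_nonneg (by lia) (by lia)

theorem mul_belowSum_le_rightSum (h : IsASM A) (i j : Fin n) :
    (A i j + rightSum A i j) * belowSum A i j ≤ rightSum A i j := by
  have hl := h.add_rightSum_mem i j
  have hr := h.rightSum_mem i j
  have hd := h.belowSum_mem i j
  have ht := h.add_belowSum_mem i j
  rcases hl with hl | hl <;> rw [hl] <;> lia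

theorem compl_mul_compl_nonneg (h : IsASM A) (i j : Fin n) :
    0 ≤ (1 - (A i j + belowSum A i j)) * (1 - rightSum A i j) := by
  have ht := h.add_belowSum_mem i j
  have hr := h.rightSum_mem i j
  exact mul_nonneg (by lia) (by lia)

theorem natCast_nuASM (h : IsASM A) :
    (nuASM A : ℤ) = ∑ i, ∑ j, (A i j + rightSum A i j) * belowSum A i j := by
  rw [nuASM, sum_inversions, Int.toNat_of_nonneg]
  exact sum_nonneg fun i _ => sum_nonneg fun j _ => h.mul_belowSum_nonneg i j

theorem natCast_nuASM_eq_sum_compl (h : IsASM A) :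
    (nuASM A : ℤ) = ∑ i, ∑ j, (1 - (A i j + belowSum A i j)) * (1 - rightSum A i j) := by
  have hterm (i j : Fin n) : (1 - (A i j + belowSum A i j)) * (1 - rightSum A i j) =
      (A i j + rightSum A i j) * belowSum A i j +
        (1 - A i j - rightSum A i j - belowSum A i j) := by
    linear_combination h.mul_rightSum_eq_mul_belowSum i j
  have hn : (n : ℤ) * n = n + 2 * n.choose 2 := by
    qify
    rw [Nat.cast_choose_two]
    ring
  simp only [hterm, sum_add_distrib, sum_sub_distrib, h.sum_rightSum, h.sum_belowSum, h.sum_row,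
    ← h.natCast_nuASM, sum_const, card_univ, Fintype.card_fin, nsmul_eq_mul]
  linarith

theorem nuASM_transpose (h : IsASM A) : nuASM (fun i j => A j i) = nuASM A := by
  rw [← Nat.cast_inj (R := ℤ), h.natCast_nuASM, h.transpose.natCast_nuASM, sum_comm]
  refine sum_congr rfl fun i _ => sum_congr rfl fun j _ => ?_
  change (A i j + belowSum A i j) * rightSum A i j = _
  linear_combination h.mul_rightSum_eq_mul_belowSum i j

end IsASM

theorem isASM_transpose_iff : IsASM (fun i j => A j i) ↔ IsASM A :=
  ⟨fun h => h.transpose, fun h => h.transpose⟩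

theorem Zqua_transpose (n : ℕ) {R : Type*} [CommRing R] (x y z : R) :
    Zqua n x y 1 1 1 z = Zsing n x y z := by
  classical
  rw [Zsing, Zqua, Zqua, ← (Equiv.piComm fun _ _ => Fin 3).sum_comp]
  refine sum_congr rfl fun e _ => ?_
  have hT : asmMat ((Equiv.piComm fun _ _ => Fin 3) e) = fun i j => asmMat e j i := rfl
  rw [hT]
  simp only [isASM_transpose_iff, one_pow, mul_one]
  split_ifs with h
  · rw [h.nuASM_transpose, muASM_transpose]
    rfl
  · rfl

end Statistics

namespace SixVertex

section CombinatorialPoint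

variable {R : Type*} [CommRing R]

/-- The parameters at which the weight of a configuration of the six-vertex model is, up to a
constant, the weight `x ^ ν(A) * y ^ μ(A)` of the corresponding alternating sign matrix `A`. The
row and column parameters are scaled so that `u - v = 1`. -/
structure CombinatorialPoint (q u v x y : R) : Prop where
  sub_eq : u - v = 1
  sq_eq : (u - q * v) ^ 2 = q * x
  mul_eq : (q - 1) ^ 2 * u * v = q * y

namespace CombinatorialPoint

variable {q u v x y : R} {n : ℕ} {A : Fin n → Fin n → ℤ}

theorem entryWeight_eq (hp : CombinatorialPoint q u v x y) (h : IsASM A) (i j : Fin n) :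
    entryWeight q u v (A i j) (rightSum A i j) (belowSum A i j) =
      (u - q * v) ^ ((A i j + rightSum A i j) * belowSum A i j +
          (1 - (A i j + belowSum A i j)) * (1 - rightSum A i j)).toNat *
        q ^ (rightSum A i j - (A i j + rightSum A i j) * belowSum A i j).toNat *
        y ^ (if A i j = -1 then 1 else 0) := by
  have hsub := hp.sub_eq
  have hmul := hp.mul_eq
  rcases h.rightSum_mem i j with hr | hr <;> rcases h.belowSum_mem i j with hd | hd <;>
    rcases h.add_rightSum_mem i j with hl | hl <;> rcases h.add_belowSum_mem i j with ht | ht <;>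
    obtain ha := eq_sub_of_add_eq hl <;>
    simp_all [entryWeight, vertexWeight]

theorem prod_entryWeight (hp : CombinatorialPoint q u v x y) (h : IsASM A) :
    ∏ i, ∏ j, entryWeight q u v (A i j) (rightSum A i j) (belowSum A i j) =
      q ^ n.choose 2 * (x ^ nuASM A * y ^ muASM A) := by
  have hω : ∑ i, ∑ j, ((A i j + rightSum A i j) * belowSum A i j +
      (1 - (A i j + belowSum A i j)) * (1 - rightSum A i j)).toNat = 2 * nuASM A := by
    zify
    simp only [Int.toNat_of_nonneg, add_nonneg, h.mul_belowSum_nonneg, h.compl_mul_compl_nonneg,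
      sum_add_distrib, ← h.natCast_nuASM, ← h.natCast_nuASM_eq_sum_compl, two_mul]
  have hq : ∑ i, ∑ j, (rightSum A i j - (A i j + rightSum A i j) * belowSum A i j).toNat +
      nuASM A = n.choose 2 := by
    zify
    simp only [Int.toNat_of_nonneg, sub_nonneg.2, h.mul_belowSum_le_rightSum, sum_sub_distrib,
      ← h.natCast_nuASM, h.sum_rightSum, sub_add_cancel]
  simp only [hp.entryWeight_eq h, prod_mul_distrib, prod_pow_eq_pow_sum, hω, ← hq, muASM_eq_sum]
  rw [pow_mul, hp.sq_eq]
  ring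

end CombinatorialPoint

end CombinatorialPoint

end SixVertex

namespace IsASM

variable {n : ℕ} {A : Fin (n + 1) → Fin (n + 1) → ℤ}

theorem add_belowSum_zero (h : IsASM A) (j : Fin (n + 1)) : A 0 j + belowSum A 0 j = 1 := by
  rw [belowSum, Fin.sum_Ioi_zero, ← h.2.2.2.2 j, Fin.sum_univ_succ]

theorem add_rightSum_zero (h : IsASM A) (i : Fin (n + 1)) : A i 0 + rightSum A i 0 = 1 :=
  h.transpose.add_belowSum_zero i

theorem top_row_mem (h : IsASM A) (j : Fin (n + 1)) : A 0 j = 0 ∨ A 0 j = 1 := by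
  have := h.add_belowSum_zero j
  have := h.belowSum_mem 0 j
  lia

theorem top_row_nonneg (h : IsASM A) (j : Fin (n + 1)) : 0 ≤ A 0 j := by
  have := h.top_row_mem j
  lia

theorem rightSum_zero_eq_one_iff (h : IsASM A) (j : Fin (n + 1)) :
    rightSum A 0 j = 1 ↔ A 0 j = 0 ∧ ∃ j', j < j' ∧ A 0 j' = 1 := by
  have hl := h.add_rightSum_mem 0 j
  constructor
  · intro hr
    have hj := h.top_row_mem j
    obtain ⟨k, hk, hne⟩ := exists_ne_zero_of_sum_ne_zero (hr.trans_ne one_ne_zero)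
    exact ⟨by lia, k, mem_Ioi.1 hk, (h.top_row_mem k).resolve_left hne⟩
  · rintro ⟨hj, k, hk, hk1⟩
    have : A 0 k ≤ rightSum A 0 j :=
      single_le_sum (fun i _ => h.top_row_nonneg i) (mem_Ioi.2 hk)
    lia

theorem sum_rightSum_toNat_zero (h : IsASM A) : ∑ j, (rightSum A 0 j).toNat = rhoT A := by
  rw [rhoT, card_filter]
  simp only [h.rightSum_toNat_eq_ite, h.rightSum_zero_eq_one_iff]
  rfl

theorem sum_belowSum_toNat_zero (h : IsASM A) : ∑ j, (belowSum A 0 j).toNat = n := by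
  have hd (j : Fin (n + 1)) : ((belowSum A 0 j).toNat : ℤ) = 1 - A 0 j := by
    have := h.add_belowSum_zero j
    have := h.belowSum_mem 0 j
    lia
  zify
  simp [hd, h.sum_row]

theorem rhoT_eq_zero_iff (h : IsASM A) : rhoT A = 0 ↔ rightSum A 0 0 = 0 := by
  rw [← h.sum_rightSum_toNat_zero, Fintype.sum_eq_zero_iff_of_nonneg fun _ => Nat.zero_le _,
    funext_iff]
  constructor
  · intro hr
    have h0 : (rightSum A 0 0).toNat = 0 := hr 0
    have := h.rightSum_mem 0 0
    lia
  · intro hr j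
    have : rightSum A 0 j ≤ rightSum A 0 0 :=
      sum_le_sum_of_subset_of_nonneg (Ioi_subset_Ioi (Fin.zero_le j))
        fun i _ _ => h.top_row_nonneg i
    exact Int.toNat_eq_zero.2 (this.trans hr.le)

theorem rhoL_eq_zero_iff (h : IsASM A) : rhoL A = 0 ↔ rightSum A 0 0 = 0 := by
  have hsum : A 0 0 + rightSum A 0 0 = A 0 0 + belowSum A 0 0 := by
    rw [h.add_rightSum_zero, h.add_belowSum_zero]
  rw [add_left_cancel hsum]
  exact h.transpose.rhoT_eq_zero_iff

end IsASM

namespace SixVertex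

section Boundary

variable {R : Type*} [CommRing R] {q u v u' v' : R}

theorem entryWeight_top {z : R} (huv : u - v = 1) (h : u' - q * v = (u - q * v) * ((u' - v) * z))
    {a r d : ℤ} (hl : a + r = 0 ∨ a + r = 1) (hr : r = 0 ∨ r = 1) (hd : d = 0 ∨ d = 1)
    (ht : a + d = 1) :
    entryWeight q u' v a r d = entryWeight q u v a r d * ((u' - v) ^ d.toNat * z ^ r.toNat) := by
  rcases hl with hl | hl <;> rcases hr with rfl | rfl <;> rcases hd with rfl | rfl <;>
    obtain rfl : a = _ := eq_sub_of_add_eq hl <;>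
    simp [entryWeight, vertexWeight, h, huv] at ht ⊢

theorem entryWeight_left {z : R} (huv : u - v = 1)
    (h : u - q * v' = (u - q * v) * ((u - v') * z)) {a r d : ℤ} (hr : r = 0 ∨ r = 1)
    (ht : a + d = 0 ∨ a + d = 1) (hd : d = 0 ∨ d = 1) (hl : a + r = 1) :
    entryWeight q u v' a r d = entryWeight q u v a r d * ((u - v') ^ r.toNat * z ^ d.toNat) := by
  rcases ht with ht | ht <;> rcases hr with rfl | rfl <;> rcases hd with rfl | rfl <;>
    obtain rfl : a = _ := eq_sub_of_add_eq hl <;>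
    simp [entryWeight, vertexWeight, h, huv] at ht ⊢

theorem entryWeight_corner {c : R} (h : u' - q * v' = (u - q * v) * c) {a r d : ℤ}
    (hr : r = 0 ∨ r = 1) (hd : d = 0 ∨ d = 1) (hl : a + r = 1) (ht : a + d = 1) :
    entryWeight q u' v' a r d = entryWeight q u v a r d * c ^ r.toNat := by
  rcases hr with rfl | rfl <;> rcases hd with rfl | rfl <;>
    obtain rfl : a = _ := eq_sub_of_add_eq hl <;>
    simp [entryWeight, vertexWeight, h] at ht ⊢

/-- The relation between the parameters `u'` of the top row, `v'` of the left column, `u` of the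
other rows and `v` of the other columns which makes the six-vertex model count alternating sign
matrices with weights `z₁` and `z₂` for the position of the `1` in the top row and in the left
column. The factor `k` compensates for the vertex in the corner. -/
structure Boundary (q u v u' v' z₁ z₂ k : R) : Prop where
  top : u' - q * v = (u - q * v) * ((u' - v) * z₁)
  left : u - q * v' = (u - q * v) * ((u - v') * z₂)
  corner : u' - q * v' = (u - q * v) * ((u' - v) * z₁ * ((u - v') * z₂) * k)

/-- The partition function with parameters `u'` in the top row, `v'` in the left column, `u` in
the `n` other rows and `v` in the `n` other columns. -/
def boundaryPartition (n : ℕ) (q u v u' v' : R) : R :=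
  partition q (vecCons u' fun _ : Fin n => u) (vecCons v' fun _ : Fin n => v)

namespace Boundary

variable {z₁ z₂ k x y : R} {n : ℕ} {A : Fin (n + 1) → Fin (n + 1) → ℤ}

theorem prod_entryWeight_eq_prod_mul (hb : Boundary q u v u' v' z₁ z₂ k) (huv : u - v = 1)
    (h : IsASM A) :
    ∏ i, ∏ j, entryWeight q (vecCons u' (fun _ : Fin n => u) i)
        (vecCons v' (fun _ : Fin n => v) j) (A i j) (rightSum A i j) (belowSum A i j) =
      (∏ i, ∏ j, entryWeight q u v (A i j) (rightSum A i j) (belowSum A i j)) *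
        (∏ j, ((u' - v) ^ (belowSum A 0 j).toNat * z₁ ^ (rightSum A 0 j).toNat)) *
        (∏ i, ((u - v') ^ (rightSum A i 0).toNat * z₂ ^ (belowSum A i 0).toNat)) *
        k ^ (rightSum A 0 0).toNat := by
  have htop (j : Fin n) := entryWeight_top huv hb.top (h.add_rightSum_mem 0 j.succ)
    (h.rightSum_mem 0 j.succ) (h.belowSum_mem 0 j.succ) (h.add_belowSum_zero j.succ)
  have hleft (i : Fin n) := entryWeight_left huv hb.left (h.rightSum_mem i.succ 0)
    (h.add_belowSum_mem i.succ 0) (h.belowSum_mem i.succ 0) (h.add_rightSum_zero i.succ)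
  have hcorner := entryWeight_corner hb.corner (h.rightSum_mem 0 0) (h.belowSum_mem 0 0)
    (h.add_rightSum_zero 0) (h.add_belowSum_zero 0)
  have hsum : belowSum A 0 0 = rightSum A 0 0 :=
    add_left_cancel ((h.add_belowSum_zero 0).trans (h.add_rightSum_zero 0).symm)
  rw [hsum] at hcorner
  simp only [Fin.prod_univ_succ, cons_val_zero, cons_val_succ, htop, hleft, hcorner,
    prod_mul_distrib, mul_pow, hsum]
  ring

theorem prod_entryWeight (hb : Boundary q u v u' v' z₁ z₂ k)
    (hp : CombinatorialPoint q u v x y) (h : IsASM A) :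
    ∏ i, ∏ j, entryWeight q (vecCons u' (fun _ : Fin n => u) i)
        (vecCons v' (fun _ : Fin n => v) j) (A i j) (rightSum A i j) (belowSum A i j) =
      q ^ (n + 1).choose 2 * ((u' - v) ^ n * (u - v') ^ n) *
        (x ^ nuASM A * y ^ muASM A * (z₁ ^ rhoT A * z₂ ^ rhoL A) *
          k ^ (rightSum A 0 0).toNat) := by
  have htop : ∏ j, ((u' - v) ^ (belowSum A 0 j).toNat * z₁ ^ (rightSum A 0 j).toNat) =
      (u' - v) ^ n * z₁ ^ rhoT A := by
    rw [prod_mul_distrib, prod_pow_eq_pow_sum, prod_pow_eq_pow_sum, h.sum_belowSum_toNat_zero,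
      h.sum_rightSum_toNat_zero]
  have hleft : ∏ i, ((u - v') ^ (rightSum A i 0).toNat * z₂ ^ (belowSum A i 0).toNat) =
      (u - v') ^ n * z₂ ^ rhoL A := by
    rw [prod_mul_distrib, prod_pow_eq_pow_sum, prod_pow_eq_pow_sum]
    exact congrArg₂ (fun m₁ m₂ => (u - v') ^ m₁ * z₂ ^ m₂) h.transpose.sum_belowSum_toNat_zero
      h.transpose.sum_rightSum_toNat_zero
  rw [hb.prod_entryWeight_eq_prod_mul hp.sub_eq h, hp.prod_entryWeight h, htop, hleft]
  ring

theorem boundaryPartition_eq (hb : Boundary q u v u' v' z₁ z₂ k)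
    (hp : CombinatorialPoint q u v x y) :
    boundaryPartition n q u v u' v' = q ^ (n + 1).choose 2 * ((u' - v) ^ n * (u - v') ^ n) *
      (k * Zadj (n + 1) x y z₁ z₂ + (1 - k) * Zsing (n + 1) x y 0) := by
  classical
  rw [boundaryPartition, partition_eq_sum, Zadj, Zsing, Zqua, Zqua, mul_sum, mul_sum,
    ← sum_add_distrib, mul_sum]
  refine sum_congr rfl fun e _ => ?_
  split_ifs with h
  · rw [hb.prod_entryWeight hp h]
    simp only [one_pow, mul_one]
    rcases h.rightSum_mem 0 0 with hr | hr
    · rw [h.rhoT_eq_zero_iff.2 hr, h.rhoL_eq_zero_iff.2 hr, hr, Int.toNat_zero]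
      ring
    · rw [zero_pow (mt h.rhoT_eq_zero_iff.1 (hr.trans_ne one_ne_zero)), hr, Int.toNat_one]
      ring
  · ring

end Boundary

namespace CombinatorialPoint

variable {x y z : R}

theorem boundaryPartition_top (hp : CombinatorialPoint q u v x y) (n : ℕ)
    (h : u' - q * v = (u - q * v) * ((u' - v) * z)) :
    boundaryPartition n q u v u' v =
      q ^ (n + 1).choose 2 * (u' - v) ^ n * Zsing (n + 1) x y z := by
  have hb : Boundary q u v u' v z 1 1 := ⟨h, by simp [hp.sub_eq], by simp [hp.sub_eq, h]⟩
  rw [hb.boundaryPartition_eq hp, hp.sub_eq, Zadj, ← Zsing]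
  ring

theorem boundaryPartition_left (hp : CombinatorialPoint q u v x y) (n : ℕ)
    (h : u - q * v' = (u - q * v) * ((u - v') * z)) :
    boundaryPartition n q u v u v' =
      q ^ (n + 1).choose 2 * (u - v') ^ n * Zsing (n + 1) x y z := by
  have hb : Boundary q u v u v' 1 z 1 := ⟨by simp [hp.sub_eq], h, by simp [hp.sub_eq, h]⟩
  rw [hb.boundaryPartition_eq hp, hp.sub_eq, Zadj, Zqua_transpose]
  ring

theorem partition_const (hp : CombinatorialPoint q u v x y) (n : ℕ) :
    partition q (fun _ : Fin n => u) (fun _ : Fin n => v) = q ^ n.choose 2 * Zun n x y := by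
  classical
  rw [partition_eq_sum, Zun, Zqua, mul_sum]
  refine sum_congr rfl fun e _ => ?_
  split_ifs with h
  · rw [hp.prod_entryWeight h]
    ring
  · ring

end CombinatorialPoint

end Boundary

end SixVertex

theorem Zun_zero {R : Type*} [CommRing R] (x y : R) : Zun 0 x y = 1 := by
  have h (e : Fin 0 → Fin 0 → Fin 3) : IsASM (asmMat e) := by simp [IsASM]
  simp [Zun, Zqua, h, nuASM, muASM]

theorem Zadj_one {R : Type*} [CommRing R] (x y z₁ z₂ : R) : Zadj 1 x y z₁ z₂ = 1 := by
  classical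
  have h (e : Fin 1 → Fin 1 → Fin 3) : IsASM (asmMat e) ↔ e = fun _ _ => 2 := by
    revert e
    simp only [IsASM, asmMat]
    decide
  simp [Zadj, Zqua, h, nuASM, muASM, rhoT, rhoR, rhoB, rhoL, asmMat]

theorem map_Zqua {R S : Type*} [CommRing R] [CommRing S] (f : R →+* S) (n : ℕ)
    (x y z1 z2 z3 z4 : R) :
    f (Zqua n x y z1 z2 z3 z4) = Zqua n (f x) (f y) (f z1) (f z2) (f z3) (f z4) := by
  simp [Zqua, apply_ite f]

namespace SixVertex

section Recursion

variable {R : Type*} [CommRing R] {q u v u' v' x y z₁ z₂ k : R}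

theorem pow_succ_choose_two (a : R) (n : ℕ) :
    a ^ (n + 1).choose 2 = a ^ n * a ^ n.choose 2 := by
  rw [Nat.choose_succ_succ' n 1, Nat.choose_one_right, pow_add]

theorem boundaryPartition_bilinear (n : ℕ) :
    (u' - u) * (v - v') * boundaryPartition (n + 1) q u v u' v' *
        partition q (fun _ : Fin n => u) (fun _ : Fin n => v) =
      straightWeight q u' v * straightWeight q u v' *
          partition q (fun _ : Fin (n + 1) => u) (fun _ : Fin (n + 1) => v) *
          boundaryPartition n q u v u' v' -
        straightWeight q u' v' * straightWeight q u v * boundaryPartition n q u v u v' *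
          boundaryPartition n q u v u' v := by
  simpa only [vecCons_const, boundaryPartition] using
    partition_bilinear q u' u v' v (fun _ : Fin n => u) fun _ => v

namespace CombinatorialPoint

theorem one_sub_mul_ne_zero [IsDomain R] (hp : CombinatorialPoint q u v x y) (hq : q ≠ 0)
    (hy : y ≠ 0) : (1 - q) * u ≠ 0 ∧ (1 - q) * v ≠ 0 := by
  have h : (1 - q) * u * ((1 - q) * v) ≠ 0 := by
    rw [show (1 - q) * u * ((1 - q) * v) = q * y by linear_combination hp.mul_eq]
    exact mul_ne_zero hq hy
  exact mul_ne_zero_iff.1 h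

theorem sub_ne_zero_of_top {z : R} [IsDomain R] (hp : CombinatorialPoint q u v x y) (hq : q ≠ 0)
    (hy : y ≠ 0) (h : u' - q * v = (u - q * v) * ((u' - v) * z)) : u' - v ≠ 0 := fun h0 =>
  (hp.one_sub_mul_ne_zero hq hy).2 (by linear_combination h + ((u - q * v) * z - 1) * h0)

theorem sub_ne_zero_of_left {z : R} [IsDomain R] (hp : CombinatorialPoint q u v x y) (hq : q ≠ 0)
    (hy : y ≠ 0) (h : u - q * v' = (u - q * v) * ((u - v') * z)) : u - v' ≠ 0 := fun h0 =>
  (hp.one_sub_mul_ne_zero hq hy).1 (by linear_combination h + ((u - q * v) * z - q) * h0)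

theorem Zsing_zero [IsDomain R] (hp : CombinatorialPoint q u v x y) (hq : q ≠ 0) (hy : y ≠ 0)
    (n : ℕ) : Zsing (n + 1) x y 0 = Zun n x y := by
  have hv : q * v - v ≠ 0 := fun h =>
    (hp.one_sub_mul_ne_zero hq hy).2 (by linear_combination -h)
  have h := hp.boundaryPartition_top (u' := q * v) (z := 0) n (by ring)
  rw [boundaryPartition, partition_vecCons_vecCons, hp.sub_eq, hp.partition_const,
    pow_succ_choose_two] at h
  simp only [prod_const, card_univ, Fintype.card_fin, mul_one] at h
  refine mul_left_cancel₀ (mul_ne_zero (mul_ne_zero (pow_ne_zero n hq)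
    (pow_ne_zero (n.choose 2) hq)) (pow_ne_zero n hv)) ?_
  linear_combination -h

end CombinatorialPoint

namespace Boundary

theorem sub_mul_sub (hb : Boundary q u v u' v' z₁ z₂ k) :
    q * ((u' - u) * (v - v')) =
      (u - q * v) ^ 2 * ((u' - v) * z₁ * ((u - v') * z₂)) * (1 - k) := by
  linear_combination (u - q * v') * hb.top + (u - q * v) * (u' - v) * z₁ * hb.left -
    (u - q * v) * hb.corner

theorem sub_one_mul_sub_one (hb : Boundary q u v u' v' z₁ z₂ k)
    (hp : CombinatorialPoint q u v x y) :
    q * (x * ((u' - v) * (u - v') * ((z₁ - 1) * (z₂ - 1)))) =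
      q * (y * ((u' - u) * (v - v'))) := by
  have htop : (u - q * v) * ((u' - v) * (z₁ - 1)) = (q - 1) * v * (u' - u) := by
    linear_combination (q * v - u') * hp.sub_eq - hb.top
  have hleft : (u - q * v) * ((u - v') * (z₂ - 1)) = (q - 1) * u * (v - v') := by
    linear_combination (q * v' - u) * hp.sub_eq - hb.left
  linear_combination -(u' - v) * (u - v') * ((z₁ - 1) * (z₂ - 1)) * hp.sq_eq +
    (u' - u) * (v - v') * hp.mul_eq + (u - q * v) * ((u - v') * (z₂ - 1)) * htop +
    (q - 1) * v * (u' - u) * hleft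

theorem Zadj_bilinear [IsDomain R] (hb : Boundary q u v u' v' z₁ z₂ k)
    (hp : CombinatorialPoint q u v x y) (hq : q ≠ 0) (hy : y ≠ 0) (n : ℕ) :
    (u' - u) * (v - v') * (k * Zadj (n + 2) x y z₁ z₂ + (1 - k) * Zun (n + 1) x y) *
        Zun n x y =
      x * (z₁ * z₂) * ((u' - v) * (u - v') * Zun (n + 1) x y *
          (k * Zadj (n + 1) x y z₁ z₂ + (1 - k) * Zun n x y) -
        k * (u' - v') * Zsing (n + 1) x y z₂ * Zsing (n + 1) x y z₁) := by
  have htop := hp.sub_ne_zero_of_top hq hy hb.top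
  have hleft := hp.sub_ne_zero_of_left hq hy hb.left
  have h := boundaryPartition_bilinear (q := q) (u := u) (v := v) (u' := u') (v' := v') n
  rw [hb.boundaryPartition_eq hp, hb.boundaryPartition_eq hp, hp.boundaryPartition_top n hb.top,
    hp.boundaryPartition_left n hb.left, hp.partition_const, hp.partition_const,
    hp.Zsing_zero hq hy, hp.Zsing_zero hq hy, straightWeight, straightWeight, straightWeight,
    straightWeight, hp.sub_eq, hb.top, hb.left, hb.corner, pow_succ_choose_two q (n + 1),
    pow_succ_choose_two q n] at h
  have hc : q * (q ^ n * q ^ n.choose 2) ^ 2 * ((u' - v) ^ (n + 1) * (u - v') ^ (n + 1)) ≠ 0 := by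
    positivity
  refine mul_left_cancel₀ hc ?_
  simp only [pow_succ _ n] at h ⊢
  generalize q ^ n.choose 2 = C₁ at h ⊢
  generalize q ^ n = C₂ at h ⊢
  generalize (u' - v) ^ n = C₃ at h ⊢
  generalize (u - v') ^ n = C₄ at h ⊢
  linear_combination h + (C₁ * C₂) ^ 2 * (C₃ * (u' - v) * (C₄ * (u - v'))) * (z₁ * z₂) *
      ((u' - v) * (u - v') * Zun (n + 1) x y *
          (k * Zadj (n + 1) x y z₁ z₂ + (1 - k) * Zun n x y) -
        k * (u' - v') * Zsing (n + 1) x y z₂ * Zsing (n + 1) x y z₁) * hp.sq_eq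

theorem Zadj_recursion [IsDomain R] (hb : Boundary q u v u' v' z₁ z₂ k)
    (hp : CombinatorialPoint q u v x y) (hq : q ≠ 0) (hx : x ≠ 0) (hy : y ≠ 0)
    (hz : y * (z₁ * z₂) ≠ (z₁ - 1) * (z₂ - 1)) (n : ℕ) :
    (z₁ - 1) * (z₂ - 1) * (Zadj (n + 2) x y z₁ z₂ - Zun (n + 1) x y) * Zun n x y =
      z₁ * z₂ * (y * Zadj (n + 1) x y z₁ z₂ * Zun (n + 1) x y +
        (x * ((z₁ - 1) * (z₂ - 1)) - y) * Zsing (n + 1) x y z₁ * Zsing (n + 1) x y z₂) := by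
  have htop := hp.sub_ne_zero_of_top hq hy hb.top
  have hleft := hp.sub_ne_zero_of_left hq hy hb.left
  have hxb := mul_ne_zero hx (mul_ne_zero htop hleft)
  have hB : (u' - u) * (v - v') = x * (z₁ * z₂) * ((u' - v) * (u - v')) * (1 - k) := by
    refine mul_left_cancel₀ hq ?_
    linear_combination hb.sub_mul_sub +
      (u' - v) * z₁ * ((u - v') * z₂) * (1 - k) * hp.sq_eq
  have hy' := mul_left_cancel₀ hq (hb.sub_one_mul_sub_one hp)
  have hk : k ≠ 0 := by
    rintro rfl
    refine hz (mul_left_cancel₀ hxb ?_)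
    linear_combination -hy' - y * hB
  refine mul_left_cancel₀ (mul_ne_zero hk hxb) ?_
  linear_combination y * hb.Zadj_bilinear hp hq hy n +
    k * (Zadj (n + 2) x y z₁ z₂ - Zun (n + 1) x y) * Zun n x y * hy' -
    y * Zun (n + 1) x y * Zun n x y * hB -
    k * x * (z₁ * z₂) * Zsing (n + 1) x y z₁ * Zsing (n + 1) x y z₂ *
      (hy' - y * (u' - v') * hp.sub_eq)

end Boundary
end Recursion
end SixVertex

namespace SixVertex

section AlgebraicallyClosed

variable {L : Type*} [Field L] {q u v x y z₁ z₂ : L}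

namespace CombinatorialPoint

theorem mul_ne_one_and_mul_ne {z : L} (hp : CombinatorialPoint q u v x y) (hq : q ≠ 0)
    (hz : x * z ^ 2 + 1 ≠ z * (x + 1 - y)) : (u - q * v) * z ≠ 1 ∧ (u - q * v) * z ≠ q := by
  have hsum : (u - q * v) * (1 + q) = q * (x + 1 - y) := by
    linear_combination hp.sq_eq - hp.mul_eq + (q - u + q ^ 2 * v) * hp.sub_eq
  refine ⟨fun h => hz (mul_left_cancel₀ hq ?_), fun h => hz (mul_left_cancel₀ hq ?_)⟩
  · linear_combination z * hsum - z ^ 2 * hp.sq_eq + ((u - q * v) * z - q) * h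
  · linear_combination z * hsum - z ^ 2 * hp.sq_eq + ((u - q * v) * z - 1) * h

theorem exists_boundary (hp : CombinatorialPoint q u v x y) (hq : q ≠ 0) (hx : x ≠ 0)
    (hy : y ≠ 0) (hz₁ : z₁ ≠ 0) (hz₂ : z₂ ≠ 0) (h₁ : x * z₁ ^ 2 + 1 ≠ z₁ * (x + 1 - y))
    (h₂ : x * z₂ ^ 2 + 1 ≠ z₂ * (x + 1 - y)) : ∃ u' v' k, Boundary q u v u' v' z₁ z₂ k := by
  have hρ : u - q * v ≠ 0 := pow_ne_zero_iff two_ne_zero |>.1 (hp.sq_eq ▸ mul_ne_zero hq hx)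
  have h₁ : 1 - (u - q * v) * z₁ ≠ 0 := sub_ne_zero.2 (hp.mul_ne_one_and_mul_ne hq h₁).1.symm
  have h₂ : q - (u - q * v) * z₂ ≠ 0 := sub_ne_zero.2 (hp.mul_ne_one_and_mul_ne hq h₂).2.symm
  obtain ⟨u', hu'⟩ : ∃ u', u' - q * v = (u - q * v) * ((u' - v) * z₁) :=
    ⟨(q * v - (u - q * v) * z₁ * v) / (1 - (u - q * v) * z₁), by field_simp; ring⟩
  obtain ⟨v', hv'⟩ : ∃ v', u - q * v' = (u - q * v) * ((u - v') * z₂) :=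
    ⟨(u - (u - q * v) * z₂ * u) / (q - (u - q * v) * z₂), by field_simp; ring⟩
  have htop := hp.sub_ne_zero_of_top hq hy hu'
  have hleft := hp.sub_ne_zero_of_left hq hy hv'
  exact ⟨u', v', (u' - q * v') / ((u - q * v) * ((u' - v) * z₁ * ((u - v') * z₂))), hu', hv',
    by field_simp⟩

end CombinatorialPoint

theorem exists_combinatorialPoint [IsAlgClosed L] (hx : x ≠ 0) (hxy : 4 * x ≠ (x + 1 - y) ^ 2) :
    ∃ q u v, q ≠ 0 ∧ CombinatorialPoint q u v x y := by
  obtain ⟨ρ, hρ⟩ : ∃ ρ : L, ρ ^ 2 - (x + 1 - y) * ρ + x = 0 := by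
    obtain ⟨ρ, hρ⟩ := IsAlgClosed.exists_root
      (Polynomial.C 1 * Polynomial.X ^ 2 + Polynomial.C (-(x + 1 - y)) * Polynomial.X +
        Polynomial.C x) (by rw [Polynomial.degree_quadratic one_ne_zero]; simp)
    refine ⟨ρ, ?_⟩
    simp only [Polynomial.IsRoot.def, Polynomial.eval_add, Polynomial.eval_mul, Polynomial.eval_C,
      Polynomial.eval_pow, Polynomial.eval_X] at hρ
    linear_combination hρ
  have hρ0 : ρ ≠ 0 := by
    rintro rfl
    exact hx (by linear_combination hρ)
  obtain ⟨q, hq⟩ : ∃ q, ρ ^ 2 = q * x := ⟨ρ ^ 2 / x, (div_mul_cancel₀ _ hx).symm⟩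
  have hq1 : 1 - q ≠ 0 := by
    intro h
    obtain rfl := sub_eq_zero.1 h
    refine hxy (mul_left_cancel₀ hx ?_)
    linear_combination (2 * x + (x + 1 - y) * ρ) * (hρ - hq) + (x + 1 - y) ^ 2 * hq
  refine ⟨q, (ρ - q) / (1 - q), (ρ - 1) / (1 - q), ?_, ?_, ?_, ?_⟩
  · rintro rfl
    exact pow_ne_zero 2 hρ0 (hq.trans (zero_mul x))
  · field_simp
    ring
  · have : (ρ - q) / (1 - q) - q * ((ρ - 1) / (1 - q)) = ρ := by
      field_simp
      ring
    rw [this, hq]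
  · have : (q - 1) ^ 2 * ((ρ - q) / (1 - q)) * ((ρ - 1) / (1 - q)) = (ρ - q) * (ρ - 1) := by
      field_simp
      ring
    rw [this]
    refine mul_left_cancel₀ hρ0 ?_
    linear_combination (ρ - 1) * hq - q * hρ

theorem Zadj_recursion_of_isAlgClosed [IsAlgClosed L] (hx : x ≠ 0) (hy : y ≠ 0) (hz₁ : z₁ ≠ 0)
    (hz₂ : z₂ ≠ 0) (hxy : 4 * x ≠ (x + 1 - y) ^ 2) (h₁ : x * z₁ ^ 2 + 1 ≠ z₁ * (x + 1 - y))
    (h₂ : x * z₂ ^ 2 + 1 ≠ z₂ * (x + 1 - y)) (h₁₂ : y * (z₁ * z₂) ≠ (z₁ - 1) * (z₂ - 1)) (n : ℕ) :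
    (z₁ - 1) * (z₂ - 1) * (Zadj (n + 2) x y z₁ z₂ - Zun (n + 1) x y) * Zun n x y =
      z₁ * z₂ * (y * Zadj (n + 1) x y z₁ z₂ * Zun (n + 1) x y +
        (x * ((z₁ - 1) * (z₂ - 1)) - y) * Zsing (n + 1) x y z₁ * Zsing (n + 1) x y z₂) := by
  obtain ⟨q, u, v, hq, hp⟩ := exists_combinatorialPoint hx hxy
  obtain ⟨u', v', k, hb⟩ := hp.exists_boundary hq hx hy hz₁ hz₂ h₁ h₂
  exact hb.Zadj_recursion hp hq hx hy h₁₂ n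

end AlgebraicallyClosed

end SixVertex

theorem map_ne_of_eval_ne {σ R S : Type*} [CommSemiring R] [CommSemiring S]
    {f : MvPolynomial σ R →+* S} (hf : Function.Injective f) (c : σ → R) {p p' : MvPolynomial σ R}
    (h : MvPolynomial.eval c p ≠ MvPolynomial.eval c p') : f p ≠ f p' :=
  hf.ne (ne_of_apply_ne (MvPolynomial.eval c) h)

theorem Zadj_recursion_X {x y z₁ z₂ : MvPolynomial (Fin 4) ℤ} (hx : x = .X 0) (hy : y = .X 1)
    (hz₁ : z₁ = .X 2) (hz₂ : z₂ = .X 3) (n : ℕ) :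
    (z₁ - 1) * (z₂ - 1) * (Zadj (n + 2) x y z₁ z₂ - Zun (n + 1) x y) * Zun n x y =
      z₁ * z₂ * (y * Zadj (n + 1) x y z₁ z₂ * Zun (n + 1) x y +
        (x * ((z₁ - 1) * (z₂ - 1)) - y) * Zsing (n + 1) x y z₁ * Zsing (n + 1) x y z₂) := by
  let F := FractionRing (MvPolynomial (Fin 4) ℤ)
  let f : MvPolynomial (Fin 4) ℤ →+* AlgebraicClosure F :=
    (algebraMap F (AlgebraicClosure F)).comp (algebraMap (MvPolynomial (Fin 4) ℤ) F)
  have hf : Function.Injective f :=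
    (algebraMap F (AlgebraicClosure F)).injective.comp (IsFractionRing.injective _ F)
  have hne {p p' : MvPolynomial (Fin 4) ℤ} (h : MvPolynomial.eval 1 p ≠ MvPolynomial.eval 1 p') :
      f p ≠ f p' := map_ne_of_eval_ne hf 1 h
  have hX₀ (i : Fin 4) : f (.X i) ≠ 0 := by simpa using hne (p := .X i) (p' := 0) (by simp)
  have hxy : f (4 * x) ≠ f ((x + 1 - y) ^ 2) := hne (by simp [hx, hy])
  have hxz₁ : f (x * z₁ ^ 2 + 1) ≠ f (z₁ * (x + 1 - y)) := hne (by simp [hx, hy, hz₁])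
  have hxz₂ : f (x * z₂ ^ 2 + 1) ≠ f (z₂ * (x + 1 - y)) := hne (by simp [hx, hy, hz₂])
  have hyz : f (y * (z₁ * z₂)) ≠ f ((z₁ - 1) * (z₂ - 1)) := hne (by simp [hy, hz₁, hz₂])
  simp only [map_mul f, map_add f, map_sub f, map_pow f, map_one f, map_ofNat f 4]
    at hxy hxz₁ hxz₂ hyz
  have h := SixVertex.Zadj_recursion_of_isAlgClosed (hx ▸ hX₀ 0) (hy ▸ hX₀ 1) (hz₁ ▸ hX₀ 2)
    (hz₂ ▸ hX₀ 3) hxy hxz₁ hxz₂ hyz n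
  apply hf
  simpa only [map_mul, map_sub, map_add, map_one, Zadj, Zun, Zsing, map_Zqua] using h

theorem Zadj_recursion {R : Type*} [CommRing R] (n : ℕ) (x y z₁ z₂ : R) :
    (z₁ - 1) * (z₂ - 1) * (Zadj (n + 2) x y z₁ z₂ - Zun (n + 1) x y) * Zun n x y =
      z₁ * z₂ * (y * Zadj (n + 1) x y z₁ z₂ * Zun (n + 1) x y +
        (x * ((z₁ - 1) * (z₂ - 1)) - y) * Zsing (n + 1) x y z₁ * Zsing (n + 1) x y z₂) := by
  let g : MvPolynomial (Fin 4) ℤ →+* R :=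
    MvPolynomial.eval₂Hom (Int.castRingHom R) ![x, y, z₁, z₂]
  have hg (i : Fin 4) : g (.X i) = ![x, y, z₁, z₂] i := MvPolynomial.eval₂_X _ _ i
  simpa [hg, Zadj, Zun, Zsing, map_Zqua] using congrArg g (Zadj_recursion_X rfl rfl rfl rfl n)

theorem isASM_asmMat_ite_eq (n : ℕ) :
    IsASM (asmMat fun i j : Fin n => if i = j then 2 else 1) := by
  have h : (asmMat fun i j : Fin n => if i = j then 2 else 1) =
      fun i j => if i = j then 1 else 0 := by
    ext i j
    rw [asmMat]
    split_ifs <;> simp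
  rw [h]
  refine ⟨fun i j => ?_, fun i j => ?_, fun i j => ?_, fun i => ?_, fun j => ?_⟩
  all_goals simp only [sum_ite_eq, sum_ite_eq']
  all_goals split_ifs <;> simp_all

theorem Zun_one_one_ne_zero (n : ℕ) : Zun n (1 : ℚ) 1 ≠ 0 := by
  classical
  refine ne_of_gt ?_
  simp only [Zun, Zqua, one_pow, mul_one]
  refine sum_pos' (fun e _ => ?_) ⟨fun i j => if i = j then 2 else 1, mem_univ _, ?_⟩
  · split_ifs <;> simp
  · rw [if_pos (isASM_asmMat_ite_eq n)]
    exact one_pos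

theorem vy_ne_zero : vy ≠ 0 := by
  simp [vy]

theorem vz1_ne_one : vz1 ≠ 1 :=
  (map_ne_of_eval_ne (IsFractionRing.injective _ K4) 0 (p := .X 2) (p' := 1)
    (by simp)).trans_eq (map_one _)

theorem vz2_ne_one : vz2 ≠ 1 :=
  (map_ne_of_eval_ne (IsFractionRing.injective _ K4) 0 (p := .X 3) (p' := 1)
    (by simp)).trans_eq (map_one _)

theorem Zun_vx_vy_ne_zero (n : ℕ) : Zun n vx vy ≠ 0 := by
  have h := map_ne_of_eval_ne (IsFractionRing.injective (MvPolynomial (Fin 4) ℚ) K4) 1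
    (p := Zun n (.X 0) (.X 1)) (p' := 0) (by simpa [Zun, map_Zqua] using Zun_one_one_ne_zero n)
  simpa only [Zun, map_Zqua, map_one, map_zero, vx, vy] using h

theorem stmt6_general {K : Type*} [Field K] {x y z₁ z₂ : K} (hy : y ≠ 0) (hz₁ : z₁ ≠ 1)
    (hz₂ : z₂ ≠ 1) {n : ℕ} (hn : 1 ≤ n) (hZ : ∀ i < n, Zun i x y ≠ 0) :
    Zadj n x y z₁ z₂ = Zun (n - 1) x y * (1 + ∑ i ∈ Icc 1 (n - 1),
      (y * z₁ * z₂ / ((z₁ - 1) * (z₂ - 1))) ^ (n - i) *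
        (1 + (x * (z₁ - 1) * (z₂ - 1) - y) * Zsing i x y z₁ * Zsing i x y z₂ /
          (y * Zun (i - 1) x y * Zun i x y))) := by
  induction n, hn using Nat.le_induction with
  | base => simp [Zadj_one, Zun_zero]
  | succ n hn ih =>
    obtain ⟨n, rfl⟩ := Nat.exists_eq_add_of_le' hn
    have hrec := Zadj_recursion n x y z₁ z₂
    have hd₁ := sub_ne_zero.2 hz₁
    have hd₂ := sub_ne_zero.2 hz₂
    have hZ₀ := hZ n (by lia)
    have hZ₁ := hZ (n + 1) (by lia)
    have ih := ih fun i hi => hZ i (by lia)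
    have hsum : ∑ i ∈ Icc 1 n, (y * z₁ * z₂ / ((z₁ - 1) * (z₂ - 1))) ^ (n + 1 + 1 - i) *
        (1 + (x * (z₁ - 1) * (z₂ - 1) - y) * Zsing i x y z₁ * Zsing i x y z₂ /
          (y * Zun (i - 1) x y * Zun i x y)) =
        y * z₁ * z₂ / ((z₁ - 1) * (z₂ - 1)) * (Zadj (n + 1) x y z₁ z₂ / Zun n x y - 1) := by
      rw [ih, Nat.add_sub_cancel, mul_div_cancel_left₀ _ hZ₀, add_sub_cancel_left, mul_sum]
      refine sum_congr rfl fun i hi => ?_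
      rw [Nat.sub_add_comm (by grind : i ≤ n + 1), pow_succ]
      ring
    rw [Nat.add_sub_cancel, sum_Icc_succ_top (by lia), hsum, Nat.add_sub_cancel_left,
      Nat.add_sub_cancel, pow_one]
    field_simp
    linear_combination hrec

/-- Closed expression for the adjacent-boundary doubly-refined ASM generating
function, as an identity in the field of rational functions `ℚ(x,y,z1,z2)`
(the convention `Z_0(x,y) = 1` holds definitionally: `Zun 0 x y = 1`). -/
theorem stmt6 (n : ℕ) (hn : 2 ≤ n) :
    Zadj n vx vy vz1 vz2 =
      Zun (n - 1) vx vy *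
        (1 + ∑ i ∈ Finset.Icc 1 (n - 1),
          (vy * vz1 * vz2 / ((vz1 - 1) * (vz2 - 1))) ^ (n - i) *
            (1 + (vx * (vz1 - 1) * (vz2 - 1) - vy) *
                Zsing i vx vy vz1 * Zsing i vx vy vz2 /
              (vy * Zun (i - 1) vx vy * Zun i vx vy))) := by
  exact stmt6_general vy_ne_zero vz1_ne_one vz2_ne_one (one_le_two.trans hn)
    fun i _ => Zun_vx_vy_ne_zero i
end

section
/- For every integer n ≥ 1 (with the convention Z_0(x,y) = 1), the two types of adjacent-boundary doubly-refined ASM generating function are related by: ((z1−1)(z2−1) − y·z1·z2)·Zadj_n(x,y;z1,z2) − (x(z1−1)(z2−1) − y)·z1·z2·Zbaradj_n(x,y;z1,z2) = (z1−1)(z2−1)·(1 − (x·z1·z2)^n)·Z_{n−1}(x,y), as an identity of polynomials in ℤ[x,y,z1,z2]. -/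
open Finset

/-! The partial sums of an alternating sign matrix along its rows and columns are the edge states
of a six-vertex configuration with domain-wall boundary, and `ν`, `μ` and the boundary statistics
are sums of contributions of single vertices. Hence `Zadj` and `Zbaradj` of size `m + 1` are
domain-wall entries of products of `m + 1` column transfer matrices, namely of one column refined
by `z₂`, standing at the left end for `Zadj` and at the right end for `Zbaradj`, and `m` equal
columns. Below their top row, a Yang–Baxter intertwiner exchanges the refined column with the
other columns; in the top row, where only three vertices occur, it still does so if the refined
column has the top weights `(z₁ - 1) * (z₂ - 1) - y * z₁ * z₂`, `x * (z₁ - 1) * (z₂ - 1) - y` and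
`-y`. The refined column can therefore be moved from one end to the other. Expanding along its top
row, the first two weights become the coefficients of `Zadj` and `Zbaradj`, and the remaining
terms, in which the refined column is trivial, are multiples of `Zun m`. -/

section Columns

variable {H V V' R : Type*} {m : ℕ}

/-- A vertex of a lattice model with horizontal edge states `H`, vertical edge states `V` and
weights in `R`: `L h g t b` is the weight of the vertex with left, right, top and bottom edge
states `h`, `g`, `t`, `b`. For fixed horizontal states it is a matrix from top to bottom, so that
stacking vertices is matrix multiplication. -/
abbrev Vertex (H V R : Type*) := H → H → Matrix V V R

section Semiring

variable [Semiring R] [Fintype V] [DecidableEq V]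

/-- The weights of a column of vertices with left edge states `h` and right edge states `g`, as a
matrix from the top to the bottom edge state. -/
def columnMonodromy (L : Fin m → Vertex H V R) (h g : Fin m → H) : Matrix V V R :=
  (List.ofFn fun i => L i (h i) (g i)).prod

/-- The transfer matrix of a column with top edge state `t` and bottom edge state `b`, from its
left to its right edge states. -/
def columnTransfer (L : Fin m → Vertex H V R) (t b : V) : Matrix (Fin m → H) (Fin m → H) R :=
  Matrix.of fun h g => columnMonodromy L h g t b

theorem columnMonodromy_succ (L : Fin (m + 1) → Vertex H V R) (h g : Fin (m + 1) → H) :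
    columnMonodromy L h g =
      L 0 (h 0) (g 0) * columnMonodromy (Fin.tail L) (Fin.tail h) (Fin.tail g) := by
  simp [columnMonodromy, List.ofFn_succ, Fin.tail]

theorem semiconjBy_columnMonodromy {P : Matrix V V R} {L L' : Fin m → Vertex H V R}
    (hP : ∀ i h g, SemiconjBy P (L i h g) (L' i h g)) (h g : Fin m → H) :
    SemiconjBy P (columnMonodromy L h g) (columnMonodromy L' h g) := by
  induction m with
  | zero => simp [columnMonodromy]
  | succ m ih =>
    rw [columnMonodromy_succ, columnMonodromy_succ]
    exact (hP 0 _ _).mul_right (ih (fun i => hP i.succ) _ _)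

theorem columnMonodromy_apply_self {L : Fin m → Vertex H V R} {h g : Fin m → H} {v : V}
    (hv : ∀ i, ∀ w ≠ v, L i (h i) (g i) v w = 0) :
    columnMonodromy L h g v v = (List.ofFn fun i => L i (h i) (g i) v v).prod := by
  induction m with
  | zero => simp [columnMonodromy]
  | succ m ih =>
    rw [columnMonodromy_succ, Matrix.mul_apply,
      Fintype.sum_eq_single v fun w hw => by rw [hv 0 w hw, zero_mul], List.ofFn_succ,
      List.prod_cons]
    exact congrArg _ (ih fun i => hv i.succ)

end Semiring

theorem sum_eq_sum_fin_cons [Fintype H] {M : Type*} [AddCommMonoid M] (f : (Fin (m + 1) → H) → M) :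
    ∑ h, f h = ∑ c, ∑ h : Fin m → H, f (Fin.cons c h) := by
  rw [← (Fin.consEquiv fun _ => H).sum_comp, Fintype.sum_prod_type]
  rfl

section CommSemiring

variable [CommSemiring R] [Fintype H]

open scoped Kronecker in
/-- Two horizontally adjacent vertices, summed over the state of the edge between them, as a
single vertex whose vertical edge states are pairs. -/
def Vertex.fuse (L : Vertex H V R) (L' : Vertex H V' R) : Vertex H (V × V') R :=
  fun h g => ∑ k, L h k ⊗ₖ L' k g

theorem Vertex.fuse_apply (L : Vertex H V R) (L' : Vertex H V' R) (h g : H) (p q : V × V') :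
    L.fuse L' h g p q = ∑ k, L h k p.1 q.1 * L' k g p.2 q.2 := by
  simp [Vertex.fuse, Matrix.sum_apply, Matrix.kroneckerMap_apply]

variable [Fintype V] [DecidableEq V] [Fintype V'] [DecidableEq V']

open scoped Kronecker in
theorem columnMonodromy_fuse (L : Fin m → Vertex H V R) (L' : Fin m → Vertex H V' R)
    (h g : Fin m → H) :
    columnMonodromy (fun i => (L i).fuse (L' i)) h g =
      ∑ k, columnMonodromy L h k ⊗ₖ columnMonodromy L' k g := by
  induction m with
  | zero => simp [columnMonodromy]
  | succ m ih =>
    simp only [columnMonodromy_succ, sum_eq_sum_fin_cons, Matrix.mul_kronecker_mul, Fin.cons_zero,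
      Fin.tail_cons, ← sum_mul_sum, ← ih]
    rfl

theorem columnTransfer_mul (L : Fin m → Vertex H V R) (L' : Fin m → Vertex H V' R)
    (t b : V) (t' b' : V') :
    columnTransfer L t b * columnTransfer L' t' b' =
      columnTransfer (fun i => (L i).fuse (L' i)) (t, t') (b, b') := by
  ext h g
  simp [columnTransfer, columnMonodromy_fuse, Matrix.mul_apply, Matrix.sum_apply]

-- The intertwiner `P` is pulled through the two columns from top to bottom; since `P` acts on the
-- boundary states `(t, t)` and `(b, b)` by `a`, the columns are exchanged up to the factor `a`.
theorem commute_columnTransfer_of_exchange {T T' : Vertex H V R} {L L' : Fin m → Vertex H V R}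
    {P : Matrix (V × V) (V × V) R} {t b : V} {a : R} (ha : IsLeftRegular a)
    (ht : P (t, t) = Pi.single (t, t) a) (hb : (fun p => P p (b, b)) = Pi.single (b, b) a)
    (hT : ∀ h g, (P * T.fuse T' h g) (t, t) = (T'.fuse T h g * P) (t, t))
    (hL : ∀ i h g, SemiconjBy P ((L i).fuse (L' i) h g) ((L' i).fuse (L i) h g)) :
    Commute (columnTransfer (Fin.cons T L : Fin (m + 1) → Vertex H V R) t b)
      (columnTransfer (Fin.cons T' L' : Fin (m + 1) → Vertex H V R) t b) := by
  rw [commute_iff_eq, columnTransfer_mul, columnTransfer_mul]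
  ext h g
  simp only [columnTransfer, Matrix.of_apply, columnMonodromy_succ]
  set M := columnMonodromy (fun i => (L i).fuse (L' i)) (Fin.tail h) (Fin.tail g)
  set M' := columnMonodromy (fun i => (L' i).fuse (L i)) (Fin.tail h) (Fin.tail g)
  have left_mul (N : Matrix (V × V) (V × V) R) (q : V × V) : (P * N) (t, t) q = a * N (t, t) q := by
    rw [Matrix.mul_apply, ht]
    simp [Pi.single_apply]
  have mul_right (N : Matrix (V × V) (V × V) R) (p : V × V) :
      (N * P) p (b, b) = a * N p (b, b) := by
    simp [Matrix.mul_apply, congrFun hb, Pi.single_apply, mul_comm]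
  apply ha
  calc a * (T.fuse T' (h 0) (g 0) * M) (t, t) (b, b)
      = (P * T.fuse T' (h 0) (g 0) * M) (t, t) (b, b) := by rw [mul_assoc, left_mul]
    _ = (T'.fuse T (h 0) (g 0) * P * M) (t, t) (b, b) := by
        rw [Matrix.mul_apply_eq_vecMul, hT, ← Matrix.mul_apply_eq_vecMul]
    _ = (T'.fuse T (h 0) (g 0) * M' * P) (t, t) (b, b) := by
        rw [mul_assoc, (semiconjBy_columnMonodromy hL _ _).eq, mul_assoc]
    _ = a * (T'.fuse T (h 0) (g 0) * M') (t, t) (b, b) := mul_right _ _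

end CommSemiring

end Columns

section Blocks

variable {H V R : Type*} {m : ℕ}

/-- The block of a matrix indexed by edge states of `m + 1` rows in which the top edge states are
`c` on the left and `d` on the right. -/
def topBlock (c d : H) (M : Matrix (Fin (m + 1) → H) (Fin (m + 1) → H) R) :
    Matrix (Fin m → H) (Fin m → H) R :=
  M.submatrix (Fin.cons (α := fun _ => H) c) (Fin.cons (α := fun _ => H) d)

/-- The entry of a transfer matrix between the domain-wall boundary states: all edges `0` on the
left and all edges `1` on the right. -/
def domainWallEntry (M : Matrix (Fin m → Bool) (Fin m → Bool) R) : R :=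
  M (fun _ => false) (fun _ => true)

theorem domainWallEntry_topBlock (M : Matrix (Fin (m + 1) → Bool) (Fin (m + 1) → Bool) R) :
    domainWallEntry (topBlock false true M) = domainWallEntry M := by
  have cons_const (c : Bool) : (Fin.cons c fun _ => c : Fin (m + 1) → Bool) = fun _ => c :=
    Fin.cons_self_tail fun _ => c
  simp [domainWallEntry, topBlock, cons_const]

variable [Semiring R]

theorem topBlock_mul [Fintype H] (c d : H) (M N : Matrix (Fin (m + 1) → H) (Fin (m + 1) → H) R) :
    topBlock c d (M * N) = ∑ e, topBlock c e M * topBlock e d N := by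
  ext h g
  simp [topBlock, Matrix.mul_apply, Matrix.sum_apply, sum_eq_sum_fin_cons]

theorem topBlock_one [DecidableEq H] (c : H) :
    topBlock c c (1 : Matrix (Fin (m + 1) → H) (Fin (m + 1) → H) R) = 1 :=
  Matrix.submatrix_one _ (Fin.cons_right_injective (α := fun _ => H) c)

theorem topBlock_columnTransfer_cons [Fintype V] [DecidableEq V] (T : Vertex H V R)
    (L : Fin m → Vertex H V R) (t b : V) (c d : H) :
    topBlock c d (columnTransfer (Fin.cons T L : Fin (m + 1) → Vertex H V R) t b) =
      ∑ s, T c d t s • columnTransfer L s b := by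
  ext h g
  simp [topBlock, columnTransfer, columnMonodromy_succ, Matrix.mul_apply, Matrix.sum_apply]

theorem domainWallEntry_add (M N : Matrix (Fin m → Bool) (Fin m → Bool) R) :
    domainWallEntry (M + N) = domainWallEntry M + domainWallEntry N :=
  rfl

theorem domainWallEntry_smul (c : R) (M : Matrix (Fin m → Bool) (Fin m → Bool) R) :
    domainWallEntry (c • M) = c * domainWallEntry M :=
  rfl

end Blocks

section SixVertex

variable {R : Type*} {m : ℕ}

/-- The six-vertex weights. The edge state `true` stands for the value `1` of the partial sums of
an alternating sign matrix along its rows and columns. -/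
def sixVertex [Zero R] (a₁ a₂ b₁ b₂ c₁ c₂ : R) : Vertex Bool Bool R
  | false, false, false, false => a₁
  | true, true, true, true => a₂
  | false, false, true, true => b₁
  | true, true, false, false => b₂
  | false, true, false, true => c₁
  | true, false, true, false => c₂
  | _, _, _, _ => 0

section CommSemiring

variable [CommSemiring R]

theorem columnTransfer_sixVertex_left (a₁ a₂ b₁ b₂ c₁ c₂ : R) (g : Fin m → Bool) :
    columnTransfer (fun _ => sixVertex a₁ a₂ b₁ b₂ c₁ c₂) true true (fun _ => false) g =
      if g = (fun _ => false) then b₁ ^ m else 0 := by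
  rw [columnTransfer, Matrix.of_apply, columnMonodromy_apply_self
    (by intro i w hw; cases w <;> cases g i <;> simp_all [sixVertex]), List.prod_ofFn]
  have entry (d : Bool) :
      sixVertex a₁ a₂ b₁ b₂ c₁ c₂ false d true true = if d = false then b₁ else 0 := by
    cases d <;> rfl
  simp [entry, prod_ite_zero, funext_iff]

theorem columnTransfer_sixVertex_right (a₁ a₂ b₁ b₂ c₁ c₂ : R) (h : Fin m → Bool) :
    columnTransfer (fun _ => sixVertex a₁ a₂ b₁ b₂ c₁ c₂) true true h (fun _ => true) =
      if h = (fun _ => true) then a₂ ^ m else 0 := by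
  rw [columnTransfer, Matrix.of_apply, columnMonodromy_apply_self
    (by intro i w hw; cases w <;> cases h i <;> simp_all [sixVertex]), List.prod_ofFn]
  have entry (c : Bool) :
      sixVertex a₁ a₂ b₁ b₂ c₁ c₂ c true true true = if c = true then a₂ else 0 := by
    cases c <;> rfl
  simp [entry, prod_ite_zero, funext_iff]

theorem domainWallEntry_columnTransfer_sixVertex_mul (a₁ a₂ b₁ b₂ c₁ c₂ : R)
    (M : Matrix (Fin m → Bool) (Fin m → Bool) R) :
    domainWallEntry (columnTransfer (fun _ => sixVertex a₁ a₂ b₁ b₂ c₁ c₂) true true * M) =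
      b₁ ^ m * domainWallEntry M := by
  simp [domainWallEntry, Matrix.mul_apply, columnTransfer_sixVertex_left]

theorem domainWallEntry_mul_columnTransfer_sixVertex (a₁ a₂ b₁ b₂ c₁ c₂ : R)
    (M : Matrix (Fin m → Bool) (Fin m → Bool) R) :
    domainWallEntry (M * columnTransfer (fun _ => sixVertex a₁ a₂ b₁ b₂ c₁ c₂) true true) =
      domainWallEntry M * a₂ ^ m := by
  simp [domainWallEntry, Matrix.mul_apply, columnTransfer_sixVertex_right]

/-- The six-vertex weights in a row whose top edges all have state `0`: only three vertices
occur. -/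
def topVertex (α β γ : R) : Vertex Bool Bool R :=
  sixVertex α 0 0 β γ 0

/-- The transfer matrix of a column of `m` vertices `L` below a top vertex with weights `α`, `β`,
`γ`, with domain-wall boundary states `0` at the top and `1` at the bottom. -/
def topColumn (α β γ : R) (L : Vertex Bool Bool R) (m : ℕ) :
    Matrix (Fin (m + 1) → Bool) (Fin (m + 1) → Bool) R :=
  columnTransfer (Fin.cons (topVertex α β γ) fun _ => L) false true

variable (α β γ : R) (L : Vertex Bool Bool R)

theorem topBlock_topColumn_false_false :
    topBlock false false (topColumn α β γ L m) = α • columnTransfer (fun _ => L) false true := by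
  simp [topColumn, topBlock_columnTransfer_cons, topVertex, sixVertex]

theorem topBlock_topColumn_false_true :
    topBlock false true (topColumn α β γ L m) = γ • columnTransfer (fun _ => L) true true := by
  simp [topColumn, topBlock_columnTransfer_cons, topVertex, sixVertex]

theorem topBlock_topColumn_true_false : topBlock true false (topColumn α β γ L m) = 0 := by
  simp [topColumn, topBlock_columnTransfer_cons, topVertex, sixVertex]

theorem topBlock_topColumn_true_true :
    topBlock true true (topColumn α β γ L m) = β • columnTransfer (fun _ => L) false true := by
  simp [topColumn, topBlock_columnTransfer_cons, topVertex, sixVertex]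

theorem topBlock_topColumn_pow_false_false (k : ℕ) :
    topBlock false false (topColumn α β γ L m ^ k) =
      α ^ k • columnTransfer (fun _ => L) false true ^ k := by
  induction k with
  | zero => simp [topBlock_one]
  | succ k ih =>
    rw [pow_succ, topBlock_mul, Fintype.sum_bool, topBlock_topColumn_true_false, mul_zero,
      zero_add, ih, topBlock_topColumn_false_false, smul_mul_smul_comm, ← pow_succ, ← pow_succ]

theorem topBlock_topColumn_pow_true_true (k : ℕ) :
    topBlock true true (topColumn α β γ L m ^ k) =
      β ^ k • columnTransfer (fun _ => L) false true ^ k := by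
  induction k with
  | zero => simp [topBlock_one]
  | succ k ih =>
    rw [pow_succ', topBlock_mul, Fintype.sum_bool, topBlock_topColumn_true_false, zero_mul,
      add_zero, ih, topBlock_topColumn_true_true, smul_mul_smul_comm, ← pow_succ', ← pow_succ']

theorem domainWallEntry_topColumn_mul (M : Matrix (Fin (m + 1) → Bool) (Fin (m + 1) → Bool) R) :
    domainWallEntry (topColumn α β γ L m * M) =
      α * domainWallEntry (columnTransfer (fun _ => L) false true * topBlock false true M) +
        γ * domainWallEntry (columnTransfer (fun _ => L) true true * topBlock true true M) := by
  rw [← domainWallEntry_topBlock, topBlock_mul, Fintype.sum_bool, topBlock_topColumn_false_false,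
    topBlock_topColumn_false_true, smul_mul_assoc, smul_mul_assoc, domainWallEntry_add,
    domainWallEntry_smul, domainWallEntry_smul, add_comm]

theorem domainWallEntry_mul_topColumn (M : Matrix (Fin (m + 1) → Bool) (Fin (m + 1) → Bool) R) :
    domainWallEntry (M * topColumn α β γ L m) =
      β * domainWallEntry (topBlock false true M * columnTransfer (fun _ => L) false true) +
        γ * domainWallEntry (topBlock false false M * columnTransfer (fun _ => L) true true) := by
  rw [← domainWallEntry_topBlock, topBlock_mul, Fintype.sum_bool, topBlock_topColumn_true_true,
    topBlock_topColumn_false_true, mul_smul_comm, mul_smul_comm, domainWallEntry_add,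
    domainWallEntry_smul, domainWallEntry_smul]

end CommSemiring

end SixVertex

section YangBaxter

variable {R : Type*} [CommRing R] (x y z₁ z₂ : R) {m : ℕ}

/-- The vertex weights counting generalized inversions by `x` and entries `-1` by `y`. -/
def bulkVertex : Vertex Bool Bool R :=
  sixVertex 1 x 1 1 1 y

/-- The vertex weights of the column carrying the variable `z₂`. As the left-most column uses only
`a₁`, `b₁`, `c₁` and the right-most one only `a₂`, `b₂`, `c₁`, the same weights record `ρL` in the
former and `ρR` in the latter; `c₂` is determined by the Yang–Baxter equation. -/
def refinedVertex : Vertex Bool Bool R :=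
  sixVertex z₂ (x * z₂) 1 1 1 ((1 - z₂) * (1 - x * z₂) + y * z₂)

/-- The intertwiner exchanging `refinedVertex` with `bulkVertex`, acting on their pair of vertical
edge states. -/
def crossing : Matrix (Bool × Bool) (Bool × Bool) R
  | (false, false), (false, false) => y + x * (z₂ - 1)
  | (true, true), (true, true) => y + x * (z₂ - 1)
  | (false, true), (false, true) => (1 - z₂) * (1 - x * z₂) + y * z₂
  | (true, false), (true, false) => y
  | (false, true), (true, false) => x * (z₂ - 1)
  | (true, false), (false, true) => z₂ - 1
  | _, _ => 0

theorem crossing_semiconjBy_fuse (h g : Bool) :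
    SemiconjBy (crossing x y z₂) ((refinedVertex x y z₂).fuse (bulkVertex x y) h g)
      ((bulkVertex x y).fuse (refinedVertex x y z₂) h g) := by
  rw [SemiconjBy]
  ext ⟨t, s⟩ ⟨b, d⟩
  simp only [Matrix.mul_apply, Fintype.sum_prod_type, Fintype.sum_bool, Vertex.fuse_apply,
    refinedVertex, bulkVertex]
  cases h <;> cases g <;> cases t <;> cases s <;> cases b <;> cases d <;>
    simp only [crossing, sixVertex] <;> ring

-- Unlike in the other rows, the exchange relation holds here only for top edge states `0`.
theorem crossing_mul_fuse_topVertex (h g : Bool) :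
    (crossing x y z₂ * (topVertex ((z₁ - 1) * (z₂ - 1) - y * z₁ * z₂)
      (x * (z₁ - 1) * (z₂ - 1) - y) (-y)).fuse (topVertex z₁ 1 1) h g) (false, false) =
    ((topVertex z₁ 1 1).fuse (topVertex ((z₁ - 1) * (z₂ - 1) - y * z₁ * z₂)
      (x * (z₁ - 1) * (z₂ - 1) - y) (-y)) h g * crossing x y z₂) (false, false) := by
  ext ⟨b, d⟩
  cases h <;> cases g <;> cases b <;> cases d <;>
    simp only [Matrix.mul_apply, Fintype.sum_prod_type, Fintype.sum_bool, Vertex.fuse_apply,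
      crossing, topVertex, sixVertex] <;> ring

theorem commute_topColumn_refinedVertex_bulkVertex (ha : IsLeftRegular (y + x * (z₂ - 1))) :
    Commute
      (topColumn ((z₁ - 1) * (z₂ - 1) - y * z₁ * z₂) (x * (z₁ - 1) * (z₂ - 1) - y) (-y)
        (refinedVertex x y z₂) m)
      (topColumn z₁ 1 1 (bulkVertex x y) m) := by
  refine commute_columnTransfer_of_exchange ha (P := crossing x y z₂) ?_ ?_
    (crossing_mul_fuse_topVertex x y z₁ z₂) fun _ => crossing_semiconjBy_fuse x y z₂
  all_goals
    ext ⟨s, t⟩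
    cases s <;> cases t <;> simp [crossing]

end YangBaxter

section Paths

variable {S R : Type*} [Fintype S] [DecidableEq S] [CommSemiring R]

theorem list_prod_ofFn_apply {k : ℕ} (M : Fin k → Matrix S S R) (a b : S) :
    (List.ofFn M).prod a b = ∑ p : Fin (k + 1) → S,
      if p 0 = a ∧ p (Fin.last k) = b then ∏ j : Fin k, M j (p j.castSucc) (p j.succ) else 0 := by
  induction k generalizing a with
  | zero =>
    rw [← (Equiv.funUnique (Fin 1) S).symm.sum_comp]
    simp [Matrix.one_apply, ite_and, Equiv.funUnique, uniqueElim]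
  | succ k ih =>
    rw [List.ofFn_succ, List.prod_cons, Matrix.mul_apply, sum_eq_sum_fin_cons]
    simp only [ih, Fin.cons_zero, ← Fin.succ_last, Fin.cons_succ, Fin.prod_univ_succ,
      Fin.castSucc_zero, ← Fin.succ_castSucc, mul_sum, ite_and]
    rw [sum_comm, sum_comm (s := univ (α := S))]
    exact sum_congr rfl fun p _ => by simp

theorem list_prod_columnTransfer_apply {H : Type*} [Fintype H] [DecidableEq H] {m n : ℕ}
    (W : Fin n → Fin m → Vertex H S R) (t b : S) (h g : Fin m → H) :
    (List.ofFn fun j => columnTransfer (W j) t b).prod h g =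
      ∑ s : (Fin (n + 1) → Fin m → H) × (Fin n → Fin (m + 1) → S),
        if (s.1 0 = h ∧ s.1 (Fin.last n) = g) ∧ ∀ j, s.2 j 0 = t ∧ s.2 j (Fin.last m) = b then
          ∏ j, ∏ i, W j i (s.1 j.castSucc i) (s.1 j.succ i) (s.2 j i.castSucc) (s.2 j i.succ)
        else 0 := by
  rw [list_prod_ofFn_apply, Fintype.sum_prod_type]
  refine sum_congr rfl fun p _ => ?_
  by_cases hp : p 0 = h ∧ p (Fin.last n) = g
  · simp only [hp, and_self, if_true, true_and, columnTransfer, columnMonodromy, Matrix.of_apply,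
      list_prod_ofFn_apply, Finset.prod_univ_sum, Fintype.piFinset_univ, Finset.prod_ite_zero,
      mem_univ, forall_const]
  · simp [hp]

end Paths

section Alternating

variable {n : ℕ}

theorem partialSum_eq_sum_castSucc_lt {M : Type*} [AddCommMonoid M] (f : Fin n → M)
    (k : Fin (n + 1)) : Fin.partialSum f k = ∑ j with j.castSucc < k, f j := by
  induction k using Fin.induction with
  | zero => simp
  | succ k ih =>
    have filter_succ : ({j | j.castSucc < k.succ} : Finset (Fin n)) =
        insert k ({j | j.castSucc < k.castSucc} : Finset (Fin n)) := by
      ext j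
      simp [le_iff_eq_or_lt]
    rw [Fin.partialSum_succ, ih, filter_succ, sum_insert (by simp), add_comm]

theorem partialSum_last {M : Type*} [AddCommMonoid M] (f : Fin n → M) :
    Fin.partialSum f (Fin.last n) = ∑ j, f j := by
  simp [partialSum_eq_sum_castSucc_lt, Fin.castSucc_lt_last]

/-- A row or column of an alternating sign matrix. -/
structure IsAlternating (f : Fin n → ℤ) : Prop where
  partialSum_eq_zero_or_one : ∀ k, Fin.partialSum f k = 0 ∨ Fin.partialSum f k = 1
  sum_eq_one : ∑ j, f j = 1

/-- The edge states along a row or column of an alternating sign matrix: the partial sums, with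
`true` standing for `1`. -/
def lineState (f : Fin n → ℤ) (k : Fin (n + 1)) : Bool :=
  decide (Fin.partialSum f k = 1)

theorem lineState_zero (f : Fin n → ℤ) : lineState f 0 = false := by
  simp [lineState]

namespace IsAlternating

variable {f : Fin n → ℤ}

theorem lineState_last (hf : IsAlternating f) : lineState f (Fin.last n) = true := by
  simp [lineState, partialSum_last, hf.sum_eq_one]

theorem toInt_lineState (hf : IsAlternating f) (k : Fin (n + 1)) :
    (lineState f k).toInt = Fin.partialSum f k := by
  rcases hf.partialSum_eq_zero_or_one k with h | h <;> simp [lineState, h]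

theorem apply_eq_sub (hf : IsAlternating f) (j : Fin n) :
    f j = (lineState f j.succ).toInt - (lineState f j.castSucc).toInt := by
  rw [hf.toInt_lineState, hf.toInt_lineState, Fin.partialSum_succ, add_sub_cancel_left]

theorem apply_nonneg_of_first (hf : IsAlternating f) {j : Fin n} (hj : (j : ℕ) = 0) :
    0 ≤ f j := by
  rw [hf.apply_eq_sub, show j.castSucc = 0 from Fin.ext hj, lineState_zero]
  cases lineState f j.succ <;> simp

theorem apply_nonneg_of_last (hf : IsAlternating f) {j : Fin n} (hj : (j : ℕ) + 1 = n) :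
    0 ≤ f j := by
  rw [hf.apply_eq_sub, show j.succ = Fin.last n from Fin.ext hj, hf.lineState_last]
  cases lineState f j.castSucc <;> simp

theorem exists_eq_single (hf : IsAlternating f) (nonneg : ∀ j, 0 ≤ f j) :
    ∃ j₀, f = Pi.single j₀ 1 := by
  obtain ⟨j₀, -, hj₀⟩ : ∃ j ∈ univ, f j ≠ 0 := exists_ne_zero_of_sum_ne_zero (by
    rw [hf.sum_eq_one]; exact one_ne_zero)
  have split : f j₀ + ∑ j ∈ univ.erase j₀, f j = 1 := by
    rw [add_sum_erase _ _ (mem_univ j₀), hf.sum_eq_one]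
  have rest_nonneg : 0 ≤ ∑ j ∈ univ.erase j₀, f j := sum_nonneg fun j _ => nonneg j
  have pos : 0 < f j₀ := (nonneg j₀).lt_of_ne' hj₀
  have rest : ∑ j ∈ univ.erase j₀, f j = 0 := by omega
  refine ⟨j₀, funext fun j => ?_⟩
  rcases eq_or_ne j j₀ with rfl | hj
  · rw [Pi.single_eq_same]
    omega
  · rw [Pi.single_eq_of_ne hj]
    exact (sum_eq_zero_iff_of_nonneg fun j _ => nonneg j).1 rest j (by simp [hj])

end IsAlternating

theorem lineState_single (j : Fin n) (k : Fin (n + 1)) :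
    lineState (Pi.single j 1) k = decide (j.castSucc < k) := by
  simp [lineState, partialSum_eq_sum_castSucc_lt, Pi.single_apply]

theorem IsAlternating.eq_zero_and_exists_gt_iff {f : Fin n → ℤ} (hf : IsAlternating f)
    (nonneg : ∀ j, 0 ≤ f j) (j : Fin n) :
    (f j = 0 ∧ ∃ j', j < j' ∧ f j' = 1) ↔ lineState f j.succ = false := by
  obtain ⟨j₀, rfl⟩ := hf.exists_eq_single nonneg
  simpa [lineState_single, Pi.single_apply] using ne_of_lt

theorem IsAlternating.eq_zero_and_exists_lt_iff {f : Fin n → ℤ} (hf : IsAlternating f)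
    (nonneg : ∀ j, 0 ≤ f j) (j : Fin n) :
    (f j = 0 ∧ ∃ j', j' < j ∧ f j' = 1) ↔ lineState f j.castSucc = true := by
  obtain ⟨j₀, rfl⟩ := hf.exists_eq_single nonneg
  simpa [lineState_single, Pi.single_apply] using ne_of_gt

theorem partialSum_toInt_sub {s : Fin (n + 1) → Bool} (hs : s 0 = false) (k : Fin (n + 1)) :
    Fin.partialSum (fun j : Fin n => (s j.succ).toInt - (s j.castSucc).toInt) k =
      (s k).toInt := by
  induction k using Fin.induction with
  | zero => simp [hs]
  | succ k ih => rw [Fin.partialSum_succ, ih, add_sub_cancel]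

theorem isAlternating_toInt_sub {s : Fin (n + 1) → Bool} (hs : s 0 = false)
    (hs' : s (Fin.last n) = true) :
    IsAlternating fun j : Fin n => (s j.succ).toInt - (s j.castSucc).toInt where
  partialSum_eq_zero_or_one k := by
    rw [partialSum_toInt_sub hs]
    cases s k <;> simp
  sum_eq_one := by rw [← partialSum_last, partialSum_toInt_sub hs, hs', Bool.toInt_true]

theorem lineState_toInt_sub {s : Fin (n + 1) → Bool} (hs : s 0 = false) :
    (lineState fun j : Fin n => (s j.succ).toInt - (s j.castSucc).toInt) = s := by
  funext k
  rw [lineState, partialSum_toInt_sub hs]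
  cases s k <;> simp

end Alternating

section AlternatingSignMatrix

variable {n : ℕ} {A : Fin n → Fin n → ℤ}

theorem sum_filter_le_eq_partialSum (f : Fin n → ℤ) (j : Fin n) :
    ∑ j' ∈ univ.filter (fun j' : Fin n => j' ≤ j), f j' = Fin.partialSum f j.succ := by
  simp [partialSum_eq_sum_castSucc_lt]

theorem isASM_iff_s7 : IsASM A ↔
    (∀ i, IsAlternating (A i)) ∧ ∀ j, IsAlternating fun i => A i j := by
  simp only [IsASM, sum_filter_le_eq_partialSum]
  constructor
  · rintro ⟨-, row, col, row_sum, col_sum⟩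
    refine ⟨fun i => ⟨Fin.cases (by simp) (row i), row_sum i⟩,
      fun j => ⟨Fin.cases (by simp) fun i => col i j, col_sum j⟩⟩
  · rintro ⟨row, col⟩
    refine ⟨fun i j => ?_, fun i j => (row i).1 j.succ, fun i j => (col j).1 i.succ,
      fun i => (row i).2, fun j => (col j).2⟩
    rw [(row i).apply_eq_sub]
    cases lineState (A i) j.succ <;> cases lineState (A i) j.castSucc <;> simp

theorem IsASM.row (hA : IsASM A) (i : Fin n) : IsAlternating (A i) :=
  (isASM_iff_s7.1 hA).1 i

theorem IsASM.col (hA : IsASM A) (j : Fin n) : IsAlternating fun i => A i j :=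
  (isASM_iff_s7.1 hA).2 j

theorem IsASM.transpose_s7 (hA : IsASM A) : IsASM fun i j => A j i :=
  isASM_iff_s7.2 ⟨hA.col, hA.row⟩

theorem sum_inversions_eq (A : Fin n → Fin n → ℤ) :
    (∑ i : Fin n, ∑ i' : Fin n, ∑ j : Fin n, ∑ j' : Fin n,
      if i < i' ∧ j' ≤ j then A i j * A i' j' else 0) =
    ∑ j : Fin n, ∑ i : Fin n,
      Fin.partialSum (fun i' => A i' j) i.castSucc * Fin.partialSum (A i) j.succ := by
  rw [sum_comm, sum_comm (s := univ (α := Fin n)) (t := univ (α := Fin n))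
    (f := fun j i => Fin.partialSum (fun i' => A i' j) i.castSucc * Fin.partialSum (A i) j.succ)]
  refine sum_congr rfl fun i' _ => ?_
  rw [sum_comm]
  refine sum_congr rfl fun j _ => ?_
  rw [← sum_filter_le_eq_partialSum, partialSum_eq_sum_castSucc_lt, sum_mul_sum]
  simp only [Fin.castSucc_lt_castSucc_iff, sum_filter, ite_and]
  refine sum_congr rfl fun i _ => ?_
  split_ifs <;> simp

theorem IsASM.nuASM_eq (hA : IsASM A) :
    nuASM A = ∑ j : Fin n, ∑ i : Fin n,
      if lineState (fun i' => A i' j) i.castSucc = true ∧ lineState (A i) j.succ = true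
        then 1 else 0 := by
  rw [nuASM, sum_inversions_eq]
  refine (congrArg Int.toNat ?_).trans (Int.toNat_natCast _)
  push_cast
  refine sum_congr rfl fun j _ => sum_congr rfl fun i _ => ?_
  rw [← (hA.row i).toInt_lineState, ← (hA.col j).toInt_lineState]
  cases lineState (A i) j.succ <;> cases lineState (fun i' => A i' j) i.castSucc <;> simp

theorem IsASM.muASM_eq (hA : IsASM A) :
    muASM A = ∑ j : Fin n, ∑ i : Fin n,
      if lineState (A i) j.castSucc = true ∧ lineState (A i) j.succ = false then 1 else 0 := by
  rw [muASM, card_filter, Fintype.sum_prod_type, sum_comm]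
  refine sum_congr rfl fun j _ => sum_congr rfl fun i _ => ?_
  rw [(hA.row i).apply_eq_sub j]
  cases lineState (A i) j.succ <;> cases lineState (A i) j.castSucc <;> simp

theorem IsASM.rhoT_eq (hA : IsASM A) :
    rhoT A = ∑ j : Fin n, ∑ i : Fin n,
      if (i : ℕ) = 0 ∧ lineState (A i) j.succ = false then 1 else 0 := by
  rw [rhoT, card_filter]
  refine sum_congr rfl fun j _ => ?_
  rw [sum_eq_single ⟨0, j.pos⟩ (fun i _ hi => if_neg fun h => hi (Fin.ext h.1)) (by simp)]
  have nonneg (k : Fin n) : 0 ≤ A ⟨0, j.pos⟩ k := (hA.col k).apply_nonneg_of_first rfl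
  simp [(hA.row _).eq_zero_and_exists_gt_iff nonneg]

theorem IsASM.rhoB_eq (hA : IsASM A) :
    rhoB A = ∑ j : Fin n, ∑ i : Fin n,
      if (i : ℕ) + 1 = n ∧ lineState (A i) j.castSucc = true then 1 else 0 := by
  rw [rhoB, card_filter]
  refine sum_congr rfl fun j _ => ?_
  have last_add_one : n - 1 + 1 = n := Nat.sub_add_cancel j.pos
  have nonneg (k : Fin n) : 0 ≤ A ⟨n - 1, Nat.sub_lt j.pos Nat.one_pos⟩ k :=
    (hA.col k).apply_nonneg_of_last last_add_one
  rw [sum_eq_single ⟨n - 1, Nat.sub_lt j.pos Nat.one_pos⟩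
    (fun i _ hi => if_neg fun h => hi (Fin.ext (Nat.eq_sub_of_add_eq h.1))) (by simp)]
  simp [last_add_one, (hA.row _).eq_zero_and_exists_lt_iff nonneg]

theorem IsASM.rhoL_eq (hA : IsASM A) :
    rhoL A = ∑ j : Fin n, ∑ i : Fin n,
      if (j : ℕ) = 0 ∧ lineState (fun i' => A i' j) i.succ = false then 1 else 0 :=
  hA.transpose_s7.rhoT_eq.trans sum_comm

theorem IsASM.rhoR_eq (hA : IsASM A) :
    rhoR A = ∑ j : Fin n, ∑ i : Fin n,
      if (j : ℕ) + 1 = n ∧ lineState (fun i' => A i' j) i.castSucc = true then 1 else 0 :=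
  hA.transpose_s7.rhoB_eq.trans sum_comm

theorem asmMat_injective : Function.Injective (asmMat (n := n)) := by
  intro e e' h
  funext i j
  have entry := congrFun₂ h i j
  simp only [asmMat] at entry
  omega

theorem IsASM.exists_asmMat_eq (hA : IsASM A) : ∃ e, asmMat e = A := by
  refine ⟨fun i j => ⟨(A i j + 1).toNat, by have := hA.1 i j; omega⟩, ?_⟩
  funext i j
  have := hA.1 i j
  simp only [asmMat]
  omega

theorem exists_isASM_lineState_eq {p : Fin (n + 1) → Fin n → Bool}
    {v : Fin n → Fin (n + 1) → Bool}
    (hp : p 0 = (fun _ => false) ∧ p (Fin.last n) = fun _ => true)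
    (hv : ∀ j, v j 0 = false ∧ v j (Fin.last n) = true)
    (ice : ∀ j i, (p j.succ i).toInt - (p j.castSucc i).toInt =
      (v j i.succ).toInt - (v j i.castSucc).toInt) :
    ∃ e : Fin n → Fin n → Fin 3, IsASM (asmMat e) ∧
      (fun k i => lineState (asmMat e i) k) = p ∧
      (fun j => lineState fun i => asmMat e i j) = v := by
  have hp₀ (i : Fin n) : p 0 i = false := congrFun hp.1 i
  have hp₁ (i : Fin n) : p (Fin.last n) i = true := congrFun hp.2 i
  set A : Fin n → Fin n → ℤ := fun i j => (p j.succ i).toInt - (p j.castSucc i).toInt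
  have col (j : Fin n) :
      (fun i => A i j) = fun i => (v j i.succ).toInt - (v j i.castSucc).toInt :=
    funext fun i => ice j i
  have hA : IsASM A := isASM_iff_s7.2
    ⟨fun i => isAlternating_toInt_sub (s := fun k => p k i) (hp₀ i) (hp₁ i),
      fun j => col j ▸ isAlternating_toInt_sub (hv j).1 (hv j).2⟩
  obtain ⟨e, he⟩ := hA.exists_asmMat_eq
  refine ⟨e, he ▸ hA, ?_, ?_⟩ <;> rw [he]
  · funext k i
    exact congrFun (lineState_toInt_sub (s := fun k => p k i) (hp₀ i)) k
  · funext j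
    rw [col, lineState_toInt_sub (hv j).1]

end AlternatingSignMatrix

section IceRule

variable {R : Type*} {n : ℕ}

/-- The ice rule: the only nonzero weights are those of vertices across which the horizontal and
the vertical edge states change by the same amount, the matrix entry at the vertex. -/
def Vertex.IceRule [Zero R] (L : Vertex Bool Bool R) : Prop :=
  ∀ h g t b, L h g t b ≠ 0 → g.toInt - h.toInt = b.toInt - t.toInt

theorem iceRule_sixVertex [Zero R] (a₁ a₂ b₁ b₂ c₁ c₂ : R) :
    (sixVertex a₁ a₂ b₁ b₂ c₁ c₂).IceRule := by
  intro h g t b hne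
  cases h <;> cases g <;> cases t <;> cases b <;> simp_all [sixVertex]

open Classical in
theorem domainWallEntry_prod_eq_sum_isASM [CommSemiring R]
    {W : Fin n → Fin n → Vertex Bool Bool R}
    (hW : ∀ j i, (W j i).IceRule) :
    domainWallEntry (List.ofFn fun j => columnTransfer (W j) false true).prod =
      ∑ e : Fin n → Fin n → Fin 3, if IsASM (asmMat e) then
        ∏ j, ∏ i, W j i (lineState (asmMat e i) j.castSucc) (lineState (asmMat e i) j.succ)
          (lineState (fun i' => asmMat e i' j) i.castSucc)
          (lineState (fun i' => asmMat e i' j) i.succ)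
      else 0 := by
  rw [domainWallEntry, list_prod_columnTransfer_apply, ← sum_filter, ← sum_filter]
  symm
  refine sum_of_injOn
    (fun e => (fun k i => lineState (asmMat e i) k, fun j => lineState fun i => asmMat e i j))
    ?_ ?_ ?_ fun _ _ => rfl
  · intro e he e' he' h
    simp only [coe_filter, mem_univ, true_and, Set.mem_ofPred_eq] at he he'
    have rowState_eq (i : Fin n) (k : Fin (n + 1)) :
        lineState (asmMat e i) k = lineState (asmMat e' i) k :=
      congrFun₂ (congrArg Prod.fst h) k i
    apply asmMat_injective
    funext i j
    rw [(he.row i).apply_eq_sub, (he'.row i).apply_eq_sub, rowState_eq, rowState_eq]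
  · intro e he
    simp only [coe_filter, mem_univ, true_and, Set.mem_ofPred_eq] at he ⊢
    exact ⟨⟨funext fun _ => lineState_zero _, funext fun i => (he.row i).lineState_last⟩,
      fun j => ⟨lineState_zero _, (he.col j).lineState_last⟩⟩
  · rintro ⟨p, v⟩ hs hne
    simp only [mem_filter, mem_univ, true_and] at hs
    by_contra hprod
    obtain ⟨e, he, rfl, rfl⟩ := exists_isASM_lineState_eq hs.1 hs.2 fun j i =>
      hW j i _ _ _ _ fun h₀ => hprod (prod_eq_zero (mem_univ j) (prod_eq_zero (mem_univ i) h₀))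
    exact hne ⟨e, by simpa using he, rfl⟩

end IceRule

section Representation

variable {R : Type*} [CommRing R] {n : ℕ}

/-- The contribution of the vertex in column `j` and row `i`, with left, right, top and bottom edge
states `h`, `g`, `t`, `b`, to the weight of an alternating sign matrix in `Zqua`. -/
def localWeight (x y z₁ z₂ z₃ z₄ : R) (j i : Fin n) (h g t b : Bool) : R :=
  x ^ (if t = true ∧ g = true then 1 else 0) * y ^ (if h = true ∧ g = false then 1 else 0) *
    z₁ ^ (if (i : ℕ) = 0 ∧ g = false then 1 else 0) *
    z₂ ^ (if (j : ℕ) + 1 = n ∧ t = true then 1 else 0) *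
    z₃ ^ (if (i : ℕ) + 1 = n ∧ h = true then 1 else 0) *
    z₄ ^ (if (j : ℕ) = 0 ∧ b = false then 1 else 0)

open Classical in
theorem Zqua_eq_sum_prod_localWeight (x y z₁ z₂ z₃ z₄ : R) :
    Zqua n x y z₁ z₂ z₃ z₄ =
      ∑ e : Fin n → Fin n → Fin 3, if IsASM (asmMat e) then
        ∏ j, ∏ i, localWeight x y z₁ z₂ z₃ z₄ j i (lineState (asmMat e i) j.castSucc)
          (lineState (asmMat e i) j.succ) (lineState (fun i' => asmMat e i' j) i.castSucc)
          (lineState (fun i' => asmMat e i' j) i.succ)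
      else 0 := by
  refine sum_congr rfl fun e _ => ?_
  split_ifs with he
  · rw [he.nuASM_eq, he.muASM_eq, he.rhoT_eq, he.rhoR_eq, he.rhoB_eq, he.rhoL_eq]
    simp only [← prod_pow_eq_pow_sum, ← prod_mul_distrib]
    rfl
  · rfl

/-- The edge states which the vertex in column `j` and row `i` may have in a domain-wall
configuration obeying the ice rule. -/
structure IsLocalState (j i : Fin n) (h g t b : Bool) : Prop where
  ice : g.toInt - h.toInt = b.toInt - t.toInt
  left : (j : ℕ) = 0 → h = false
  right : (j : ℕ) + 1 = n → g = true
  top : (i : ℕ) = 0 → t = false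
  bottom : (i : ℕ) + 1 = n → b = true

theorem IsASM.isLocalState {A : Fin n → Fin n → ℤ} (hA : IsASM A) (j i : Fin n) :
    IsLocalState j i (lineState (A i) j.castSucc) (lineState (A i) j.succ)
      (lineState (fun i' => A i' j) i.castSucc) (lineState (fun i' => A i' j) i.succ) where
  ice := by rw [← (hA.row i).apply_eq_sub, ← (hA.col j).apply_eq_sub]
  left hj := by rw [show j.castSucc = 0 from Fin.ext hj, lineState_zero]
  right hj := by rw [show j.succ = Fin.last n from Fin.ext hj, (hA.row i).lineState_last]
  top hi := by rw [show i.castSucc = 0 from Fin.ext hi, lineState_zero]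
  bottom hi := by rw [show i.succ = Fin.last n from Fin.ext hi, (hA.col j).lineState_last]

theorem domainWallEntry_prod_eq_Zqua {x y z₁ z₂ z₃ z₄ : R} {W : Fin n → Fin n → Vertex Bool Bool R}
    (ice : ∀ j i, (W j i).IceRule)
    (hW : ∀ j i h g t b, IsLocalState j i h g t b →
      W j i h g t b = localWeight x y z₁ z₂ z₃ z₄ j i h g t b) :
    domainWallEntry (List.ofFn fun j => columnTransfer (W j) false true).prod =
      Zqua n x y z₁ z₂ z₃ z₄ := by
  rw [domainWallEntry_prod_eq_sum_isASM ice, Zqua_eq_sum_prod_localWeight]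
  refine sum_congr rfl fun e _ => ?_
  split_ifs with he
  · exact prod_congr rfl fun j _ => prod_congr rfl fun i _ =>
      hW j i _ _ _ _ (he.isLocalState j i)
  · rfl

variable (x y z₁ z₂ : R) (m : ℕ)

theorem domainWallEntry_columnTransfer_bulkVertex_pow :
    domainWallEntry (columnTransfer (fun _ : Fin m => bulkVertex x y) false true ^ m) =
      Zun m x y := by
  rw [Zun, ← domainWallEntry_prod_eq_Zqua fun _ _ => iceRule_sixVertex 1 x 1 1 1 y]
  · simp [bulkVertex]
  · rintro j i h g t b ⟨ice, -, -, -, -⟩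
    cases h <;> cases g <;> cases t <;> cases b <;> simp_all [sixVertex, localWeight]

theorem domainWallEntry_topColumn_mul_eq_Zadj :
    domainWallEntry (topColumn (z₁ * z₂) 1 1 (refinedVertex x y z₂) m *
      topColumn z₁ 1 1 (bulkVertex x y) m ^ m) = Zadj (m + 1) x y z₁ z₂ := by
  rw [Zadj, ← domainWallEntry_prod_eq_Zqua (W := Fin.cons
    (Fin.cons (topVertex (z₁ * z₂) 1 1) fun _ : Fin m => refinedVertex x y z₂)
    fun _ : Fin m => Fin.cons (topVertex z₁ 1 1) fun _ : Fin m => bulkVertex x y)]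
  · simp [List.ofFn_succ, topColumn]
  · intro j i
    cases j using Fin.cases <;> cases i using Fin.cases <;> exact iceRule_sixVertex _ _ _ _ _ _
  · rintro j i h g t b ⟨ice, left, -, top, -⟩
    cases j using Fin.cases <;> cases i using Fin.cases <;> cases h <;> cases g <;> cases t <;>
      cases b <;> simp_all [topVertex, refinedVertex, bulkVertex, sixVertex, localWeight]

theorem domainWallEntry_mul_topColumn_eq_Zbaradj :
    domainWallEntry (topColumn z₁ 1 1 (bulkVertex x y) m ^ m *
      topColumn 1 1 1 (refinedVertex x y z₂) m) = Zbaradj (m + 1) x y z₁ z₂ := by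
  rw [Zbaradj, ← domainWallEntry_prod_eq_Zqua (W := Fin.snoc
    (fun _ : Fin m => Fin.cons (topVertex z₁ 1 1) fun _ : Fin m => bulkVertex x y)
    (Fin.cons (topVertex 1 1 1) fun _ : Fin m => refinedVertex x y z₂))]
  · simp [-List.ofFn_succ, List.ofFn_succ', topColumn]
  · intro j i
    cases j using Fin.lastCases <;> cases i using Fin.cases <;>
      simp only [Fin.snoc_last, Fin.snoc_castSucc] <;> exact iceRule_sixVertex _ _ _ _ _ _
  · rintro j i h g t b ⟨ice, -, right, top, -⟩
    cases j using Fin.lastCases with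
    | last =>
      cases i using Fin.cases <;> cases h <;> cases g <;> cases t <;> cases b <;>
        simp_all [topVertex, refinedVertex, sixVertex, localWeight]
    | cast j =>
      have := j.isLt.ne
      cases i using Fin.cases <;> cases h <;> cases g <;> cases t <;> cases b <;>
        simp_all [topVertex, bulkVertex, sixVertex, localWeight]

end Representation

section Relation

variable {R : Type*} [CommRing R]

theorem map_Zqua_s7 {S : Type*} [CommRing S] (φ : R →+* S) (n : ℕ) (x y z₁ z₂ z₃ z₄ : R) :
    φ (Zqua n x y z₁ z₂ z₃ z₄) = Zqua n (φ x) (φ y) (φ z₁) (φ z₂) (φ z₃) (φ z₄) := by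
  simp [Zqua, map_sum, apply_ite φ]

variable (m : ℕ)

theorem Zadj_Zbaradj_relation_of_isLeftRegular {x y z₁ z₂ : R}
    (hreg : IsLeftRegular (y + x * (z₂ - 1))) :
    ((z₁ - 1) * (z₂ - 1) - y * z₁ * z₂) * Zadj (m + 1) x y z₁ z₂
      - (x * (z₁ - 1) * (z₂ - 1) - y) * z₁ * z₂ * Zbaradj (m + 1) x y z₁ z₂ =
    (z₁ - 1) * (z₂ - 1) * (1 - (x * z₁ * z₂) ^ (m + 1)) * Zun m x y := by
  have comm := congrArg domainWallEntry
    ((commute_topColumn_refinedVertex_bulkVertex (m := m) x y z₁ z₂ hreg).pow_right m).eq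
  rw [← domainWallEntry_topColumn_mul_eq_Zadj, ← domainWallEntry_mul_topColumn_eq_Zbaradj,
    ← domainWallEntry_columnTransfer_bulkVertex_pow]
  simp only [domainWallEntry_topColumn_mul, domainWallEntry_mul_topColumn,
    topBlock_topColumn_pow_true_true, topBlock_topColumn_pow_false_false, refinedVertex,
    domainWallEntry_columnTransfer_sixVertex_mul, domainWallEntry_mul_columnTransfer_sixVertex,
    domainWallEntry_smul] at comm ⊢
  linear_combination z₁ * z₂ * comm

-- Over `R[X]`, with `X` in place of `y`, the factor `y + x * (z₂ - 1)` is monic, hence regular.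
open Polynomial in
theorem Zadj_Zbaradj_relation (x y z₁ z₂ : R) :
    ((z₁ - 1) * (z₂ - 1) - y * z₁ * z₂) * Zadj (m + 1) x y z₁ z₂
      - (x * (z₁ - 1) * (z₂ - 1) - y) * z₁ * z₂ * Zbaradj (m + 1) x y z₁ z₂ =
    (z₁ - 1) * (z₂ - 1) * (1 - (x * z₁ * z₂) ^ (m + 1)) * Zun m x y := by
  have regular : IsLeftRegular (X + C x * (C z₂ - 1) : R[X]) := by
    rw [← C_1, ← C_sub, ← C_mul]
    exact (monic_X_add_C _).isRegular.left
  have generic := congrArg (evalRingHom y)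
    (Zadj_Zbaradj_relation_of_isLeftRegular m (z₁ := C z₁) regular)
  simpa only [map_sub, map_mul, map_pow, map_one, Zadj, Zbaradj, Zun, map_Zqua_s7,
    coe_evalRingHom, eval_C, eval_X] using generic

end Relation

/-- Relation between the two types of adjacent-boundary doubly-refined ASM
generating function, stated for all values of the variables in any commutative
ring, equivalently as an identity of polynomials in `ℤ[x,y,z1,z2]` (the
convention `Z_0(x,y) = 1` holds definitionally: `Zun 0 x y = 1`). -/
theorem stmt7 {R : Type*} [CommRing R] (x y z1 z2 : R) (n : ℕ) (hn : 1 ≤ n) :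
    ((z1 - 1) * (z2 - 1) - y * z1 * z2) * Zadj n x y z1 z2
      - (x * (z1 - 1) * (z2 - 1) - y) * z1 * z2 * Zbaradj n x y z1 z2 =
    (z1 - 1) * (z2 - 1) * (1 - (x * z1 * z2) ^ n) * Zun (n - 1) x y := by
  obtain ⟨m, rfl⟩ := Nat.exists_eq_add_of_le' hn
  exact Zadj_Zbaradj_relation m x y z1 z2
end
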